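/- Let T be a computable real number with 0 < T ≤ 1. Then the partition function Z(T) = ∑_{p ∈ dom U} 2^{−|p|/T} converges, and its sum is a left-computable real number which is weakly Chaitin T-random and T-compressible. -/

import Mathlib

open Filter

/-- A set of finite binary strings is prefix-free if no element of it is a
prefix of another (distinct) element of it. -/
def PrefixFree (S : Set (List Bool)) : Prop :=
  ∀ p ∈ S, ∀ q ∈ S, p <+: q → p = q

/-- A computer: a partial recursive function from finite binary strings to
finite binary strings whose domain is a prefix-free set. -/
structure Computer where
  f : List Bool →. List Bool
  partrec : Partrec f
  prefixFree : PrefixFree {p | (f p).Dom}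

/-- The domain of a computer. -/
def Computer.domain (C : Computer) : Set (List Bool) := {p | (C.f p).Dom}

/-- A computer `U` is optimal if every computer can be simulated on `U` with
only a constant increase in program length. -/
def IsOptimal (U : Computer) : Prop :=
  ∀ C : Computer, ∃ d : ℕ, ∀ p : List Bool, (C.f p).Dom →
    ∃ p' : List Bool, p'.length ≤ p.length + d ∧ ∀ s, s ∈ C.f p → s ∈ U.f p'

/-- Program-size complexity `H(s)`: the minimal length of a program `p`
with `U(p) = s`. -/
noncomputable def H (U : Computer) (s : List Bool) : ℕ :=
  sInf {n | ∃ p : List Bool, p.length = n ∧ s ∈ U.f p}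

/-- The `n`-th bit (`n ≥ 1`) of the base-two expansion of `x mod 1`
(the expansion chosen with infinitely many zeros). -/
noncomputable def binDigit (x : ℝ) (n : ℕ) : Bool :=
  decide (⌊Int.fract x * 2 ^ n⌋ % 2 = 1)

/-- The first `n` bits of the base-two expansion of `x mod 1` (with
infinitely many zeros). -/
noncomputable def bits (x : ℝ) (n : ℕ) : List Bool :=
  (List.range n).map fun i => binDigit x (i + 1)

/-- A real `x` is weakly Chaitin `D`-random (w.r.t. the computer `U`). -/
def WeaklyChaitinRandom (U : Computer) (D x : ℝ) : Prop :=
  ∃ c : ℝ, ∀ n : ℕ, 1 ≤ n → D * n - c ≤ (H U (bits x n) : ℝ)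

/-- A real `x` is Chaitin `D`-random (w.r.t. the computer `U`). -/
def ChaitinRandom (U : Computer) (D x : ℝ) : Prop :=
  Tendsto (fun n : ℕ => (H U (bits x n) : ℝ) - D * n) atTop atTop

/-- A real `x` is `D`-compressible (w.r.t. the computer `U`). -/
def DCompressible (U : Computer) (D x : ℝ) : Prop :=
  Filter.limsup (fun n : ℕ => (H U (bits x n) : ℝ) / n) atTop ≤ D

/-- A computable real number. -/
def ComputableReal (T : ℝ) : Prop :=
  ∃ f : ℕ → ℚ, Computable f ∧ ∀ n : ℕ, 1 ≤ n → |T - (f n : ℝ)| < 1 / n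

/-- A right-computable real number. -/
def RightComputable (T : ℝ) : Prop :=
  ∃ g : ℕ → ℚ, Computable g ∧ (∀ n, T ≤ (g n : ℝ)) ∧
    Tendsto (fun n => ((g n : ℚ) : ℝ)) atTop (nhds T)

/-- A left-computable real number. -/
def LeftComputable (T : ℝ) : Prop := RightComputable (-T)

/-- The term `2 ^ (-|p| / T)` of the partition function `Z(T)`. -/
noncomputable def zterm (U : Computer) (T : ℝ) (p : U.domain) : ℝ :=
  (2 : ℝ) ^ (-((p : List Bool).length : ℝ) / T)

/-- The term `|p| ^ Q * 2 ^ (-|p| / T)` of `W(Q,T)`. -/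
noncomputable def wterm (U : Computer) (Q T : ℝ) (p : U.domain) : ℝ :=
  ((p : List Bool).length : ℝ) ^ Q * (2 : ℝ) ^ (-((p : List Bool).length : ℝ) / T)

/-- The term `|p| * 2 ^ (-|p| / T)` of `W(1,T)`. -/
noncomputable def wlterm (U : Computer) (T : ℝ) (p : U.domain) : ℝ :=
  ((p : List Bool).length : ℝ) * (2 : ℝ) ^ (-((p : List Bool).length : ℝ) / T)

/-- The term `|p| ^ 2 * 2 ^ (-|p| / T)` of `W(2,T)`. -/
noncomputable def wsqterm (U : Computer) (T : ℝ) (p : U.domain) : ℝ :=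
  ((p : List Bool).length : ℝ) ^ 2 * (2 : ℝ) ^ (-((p : List Bool).length : ℝ) / T)

/-- A lower-computable function `f : ℕ⁺ → [0,∞)` (represented on `ℕ`,
with all conditions imposed on positive arguments). -/
def LowerComputableFun (f : ℕ → ℝ) : Prop :=
  ∃ a : ℕ → ℕ → ℚ, Computable₂ a ∧
    (∀ k n : ℕ, 1 ≤ k → 1 ≤ n → (a k n : ℝ) ≤ f n) ∧
    (∀ n : ℕ, 1 ≤ n → Tendsto (fun k => ((a k n : ℚ) : ℝ)) atTop (nhds (f n)))

/-- A lower-computable semi-measure on finite binary strings. -/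
def LowerComputableSemiMeasure (r : List Bool → ℝ) : Prop :=
  (∀ s, 0 ≤ r s) ∧ (∀ s, r s ≤ 1) ∧ Summable r ∧ (∑' s, r s) ≤ 1 ∧
    ∃ f : ℕ → List Bool → ℚ, Computable₂ f ∧
      (∀ n s, ((f n s : ℚ) : ℝ) ≤ r s) ∧
      (∀ s, Tendsto (fun n => ((f n s : ℚ) : ℝ)) atTop (nhds (r s)))

/-- A universal probability. -/
def UniversalProbability (m : List Bool → ℝ) : Prop :=
  LowerComputableSemiMeasure m ∧
    ∀ r : List Bool → ℝ, LowerComputableSemiMeasure r →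
      ∃ c : ℝ, 0 < c ∧ ∀ s, c * r s ≤ m s


section RatPart
open Encodable

theorem partrec_find {α} [Primcodable α] {p : α → ℕ → Bool} (hp : Computable₂ p) :
    ∃ g : α →. ℕ, Partrec g ∧ (∀ a n, n ∈ g a → p a n = true) ∧
      (∀ a n, p a n = true → (g a).Dom) := by
  refine ⟨_, Partrec.rfind hp.partrec₂, ?_, ?_⟩
  · intro a n h
    have := Nat.rfind_spec h
    simpa using this
  · intro a n h
    obtain ⟨m, hm, _⟩ := Nat.rfind_min' (p := p a) (m := n) h
    exact Part.dom_iff_mem.2 ⟨m, hm⟩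

theorem computable_find {α} [Primcodable α] {p : α → ℕ → Bool} (hp : Computable₂ p)
    (hex : ∀ a, ∃ n, p a n = true) :
    ∃ g : α → ℕ, Computable g ∧ ∀ a, p a (g a) = true := by
  obtain ⟨g, hg, h1, h2⟩ := partrec_find hp
  have hd : ∀ a, (g a).Dom := fun a => (hex a).elim fun n hn => h2 a n hn
  exact ⟨fun a => (g a).get (hd a), Partrec.of_eq_tot hg fun a => Part.get_mem _,
    fun a => h1 a _ (Part.get_mem _)⟩

theorem rat_enc0 (q : ℚ) : (Rat.instEncodable.encode q) = Nat.pair (encode q.num) q.den := by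
  rfl

theorem int_enc (z : ℤ) : encode z = if 0 ≤ z then 2 * z.natAbs else 2 * z.natAbs - 1 := by
  cases z with
  | ofNat n => rfl
  | negSucc n =>
    show 2 * n + 1 = _
    simp; omega

theorem rat_enc (q : ℚ) : (Rat.instDenumerable.toEncodable.encode q) =
   ((List.range (Rat.instEncodable.encode q)).countP
     (fun x => @decide (x ∈ Set.range Rat.instEncodable.encode)
        (Encodable.decidableRangeEncode ℚ x))) := by
  rfl

theorem mem_rat_range (x : ℕ) : x ∈ Set.range (Rat.instEncodable.encode) ↔
    0 < x.unpair.2 ∧ Nat.gcd ((x.unpair.1 + 1) / 2) x.unpair.2 = 1 := by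
  constructor
  · rintro ⟨q, rfl⟩
    rw [rat_enc0, Nat.unpair_pair]
    refine ⟨q.den_pos, ?_⟩
    have : (encode q.num + 1) / 2 = q.num.natAbs := by
      rw [int_enc]; split_ifs <;> omega
    simpa [this] using q.reduced
  · rintro ⟨h1, h2⟩
    obtain ⟨z, hz⟩ : ∃ z : ℤ, encode z = x.unpair.1 := by
      refine ⟨Denumerable.ofNat ℤ x.unpair.1, ?_⟩
      exact Denumerable.encode_ofNat (α := ℤ) _
    have : (x.unpair.1 + 1) / 2 = z.natAbs := by
      rw [← hz, int_enc]; split_ifs <;> omega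
    rw [this] at h2
    refine ⟨⟨z, x.unpair.2, h1.ne', h2⟩, ?_⟩
    rw [rat_enc0]
    simp [hz]

theorem primrec_pow : Primrec₂ (fun a b : ℕ => a ^ b) := Primrec₂.unpaired'.1 Nat.Primrec.pow

theorem primrec_gcd : Primrec₂ Nat.gcd := by
  have h : PrimrecRel (fun (x : ℕ × ℕ) (d : ℕ) => x.1 % d = 0 ∧ x.2 % d = 0) := by
    apply PrimrecPred.and
    · exact Primrec.eq.comp (Primrec.nat_mod.comp (Primrec.fst.comp Primrec.fst) Primrec.snd)
        (Primrec.const 0)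
    · exact Primrec.eq.comp (Primrec.nat_mod.comp (Primrec.snd.comp Primrec.fst) Primrec.snd)
        (Primrec.const 0)
  refine (Primrec.nat_findGreatest (f := fun x : ℕ × ℕ => x.1 + x.2)
    (Primrec.nat_add.comp Primrec.fst Primrec.snd) h).of_eq ?_
  rintro ⟨a, b⟩
  show Nat.findGreatest _ (a + b) = Nat.gcd a b
  rw [Nat.findGreatest_eq_iff]
  refine ⟨?_, ?_, ?_⟩
  · rcases Nat.eq_zero_or_pos a with rfl | ha
    · simp
    · exact (Nat.gcd_le_left b ha).trans (Nat.le_add_right _ _)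
  · intro _
    exact ⟨Nat.mod_eq_zero_of_dvd (Nat.gcd_dvd_left _ _),
      Nat.mod_eq_zero_of_dvd (Nat.gcd_dvd_right _ _)⟩
  · rintro n h1 h2 ⟨h3, h4⟩
    have := Nat.dvd_gcd (Nat.dvd_of_mod_eq_zero h3) (Nat.dvd_of_mod_eq_zero h4)
    rcases Nat.eq_zero_or_pos (Nat.gcd a b) with h | h
    · rw [Nat.gcd_eq_zero_iff] at h
      omega
    · exact absurd (Nat.le_of_dvd h this) (by omega)

theorem primrec_dvdish {α} [Primcodable α] {f g : α → ℕ} (hf : Primrec f) (hg : Primrec g) :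
    Primrec fun a => f a / g a := Primrec.nat_div.comp hf hg

/-- The rational `(a - b) / (d + 1)`. -/
def mkQ (x : ℕ × ℕ × ℕ) : ℚ := ((x.1 : ℚ) - x.2.1) / (x.2.2 + 1)

def mkQcode (x : ℕ × ℕ × ℕ) : ℕ :=
  Nat.pair (if x.2.1 ≤ x.1 then 2 * ((x.1 - x.2.1) / Nat.gcd (x.1 - x.2.1) (x.2.2 + 1))
    else 2 * ((x.2.1 - x.1) / Nat.gcd (x.2.1 - x.1) (x.2.2 + 1)) - 1)
    ((x.2.2 + 1) / Nat.gcd ((x.1 - x.2.1) + (x.2.1 - x.1)) (x.2.2 + 1))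

theorem primrec_mkQcode : Primrec mkQcode := by
  have ha : Primrec (fun x : ℕ × ℕ × ℕ => x.1) := Primrec.fst
  have hb : Primrec (fun x : ℕ × ℕ × ℕ => x.2.1) := Primrec.fst.comp Primrec.snd
  have hd : Primrec (fun x : ℕ × ℕ × ℕ => x.2.2 + 1) :=
    Primrec.succ.comp (Primrec.snd.comp Primrec.snd)
  have hab := Primrec.nat_sub.comp ha hb
  have hba := Primrec.nat_sub.comp hb ha
  refine Primrec₂.natPair.comp (Primrec.ite (Primrec.nat_le.comp hb ha) ?_ ?_) ?_
  · exact Primrec.nat_mul.comp (Primrec.const 2)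
      (Primrec.nat_div.comp hab (primrec_gcd.comp hab hd))
  · exact Primrec.nat_sub.comp (Primrec.nat_mul.comp (Primrec.const 2)
      (Primrec.nat_div.comp hba (primrec_gcd.comp hba hd))) (Primrec.const 1)
  · exact Primrec.nat_div.comp hd (primrec_gcd.comp (Primrec.nat_add.comp hab hba) hd)

theorem rat_enc0_of (q : ℚ) (z : ℤ) (d : ℕ) (hd : 0 < d) (hq : q = (z : ℚ) / d)
    : (Rat.instEncodable.encode q) =
      Nat.pair (if 0 ≤ z then 2 * (z.natAbs / Nat.gcd z.natAbs d)
        else 2 * (z.natAbs / Nat.gcd z.natAbs d) - 1) (d / Nat.gcd z.natAbs d) := by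
  have hg : 0 < Nat.gcd z.natAbs d := Nat.gcd_pos_of_pos_right _ hd
  set g := Nat.gcd z.natAbs d with hgdef
  obtain ⟨z', hz'⟩ : (g : ℤ) ∣ z := Int.natCast_dvd.2 (Nat.gcd_dvd_left _ _)
  obtain ⟨d', hd'⟩ : g ∣ d := Nat.gcd_dvd_right _ _
  have hd'0 : 0 < d' := by
    rcases Nat.eq_zero_or_pos d' with h | h
    · subst h; simp at hd'; omega
    · exact h
  have hzn : z.natAbs = g * z'.natAbs := by rw [hz']; simp [Int.natAbs_mul]
  have hcop : Nat.Coprime z'.natAbs d' := by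
    have h1 : g = g * Nat.gcd z'.natAbs d' := by
      conv_lhs => rw [hgdef, hzn, hd', Nat.gcd_mul_left]
    exact Nat.eq_of_mul_eq_mul_left hg (by simpa using h1.symm)
  have hq' : q = ((z' : ℤ) : ℚ) / ((d' : ℤ) : ℚ) := by
    rw [hq, hz', hd']
    have : (g : ℚ) ≠ 0 := by exact_mod_cast hg.ne'
    push_cast
    rw [mul_div_mul_left _ _ this]
  have hnum : q.num = z' := by
    rw [hq']; exact Rat.num_div_eq_of_coprime (by exact_mod_cast hd'0) (by simpa using hcop)
  have hden : q.den = d' := by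
    have := Rat.den_div_eq_of_coprime (a := z') (b := d') (by exact_mod_cast hd'0) (by simpa using hcop)
    rw [← hq'] at this
    exact_mod_cast this
  rw [rat_enc0, hnum, hden, int_enc, hzn, Nat.mul_div_cancel_left _ hg]
  have h3 : (0 ≤ z) ↔ 0 ≤ z' := by
    rw [hz']
    constructor
    · intro h
      exact nonneg_of_mul_nonneg_right h (by exact_mod_cast hg)
    · intro h; positivity
  have h4 : d / g = d' := by conv_lhs => rw [hd', Nat.mul_div_cancel_left _ hg]
  simp only [h3, h4]

theorem enc_mkQ (x : ℕ × ℕ × ℕ) : Rat.instEncodable.encode (mkQ x) = mkQcode x := by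
  obtain ⟨a, b, d⟩ := x
  rw [rat_enc0_of (mkQ (a, b, d)) ((a : ℤ) - b) (d + 1) (Nat.succ_pos _) (by simp [mkQ])]
  unfold mkQcode
  simp only
  rcases le_total b a with h | h
  · have e : ((a : ℤ) - b).natAbs = a - b := by omega
    have e2 : b - a = 0 := by omega
    have e3 : (0 : ℤ) ≤ (a : ℤ) - b := by omega
    simp [e, h, e2]
  · rcases h.eq_or_lt with rfl | h
    · simp
    · have e : ((a : ℤ) - b).natAbs = b - a := by omega
      have e2 : a - b = 0 := by omega
      have e3 : ¬ (0 : ℤ) ≤ (a : ℤ) - b := by omega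
      have e4 : ¬ b ≤ a := by omega
      simp only [e, e2, e3, e4, if_false, zero_add]

theorem computable_mkQ : Computable mkQ := by
  apply Primrec.to_comp
  have hP : PrimrecPred (fun x : ℕ => 0 < x.unpair.2 ∧ Nat.gcd ((x.unpair.1 + 1) / 2) x.unpair.2 = 1) := by
    have h1 : Primrec (fun x : ℕ => x.unpair.1) := Primrec.fst.comp Primrec.unpair
    have h2 : Primrec (fun x : ℕ => x.unpair.2) := Primrec.snd.comp Primrec.unpair
    apply PrimrecPred.and
    · exact Primrec.nat_lt.comp (Primrec.const 0) h2
    · exact Primrec.eq.comp (primrec_gcd.comp (Primrec.nat_div.comp (Primrec.succ.comp h1)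
        (Primrec.const 2)) h2) (Primrec.const 1)
  have := Primrec.list_length.comp
    ((Primrec.listFilter hP).comp (Primrec.list_range.comp primrec_mkQcode))
  rw [← Primrec.encode_iff]
  refine this.of_eq fun x => ?_
  rw [← enc_mkQ]
  refine Eq.trans ?_ (rat_enc (mkQ x)).symm
  rw [List.countP_eq_length_filter]
  congr 1
  apply List.filter_congr
  intro y _
  simp only [mem_rat_range]

theorem mkQ_surj (q : ℚ) : ∃ x, mkQ x = q := by
  refine ⟨(q.num.toNat, (-q.num).toNat, q.den - 1), ?_⟩
  have h1 : ((q.den - 1 : ℕ) : ℚ) + 1 = q.den := by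
    have := q.den_pos
    have h : q.den - 1 + 1 = q.den := by omega
    exact_mod_cast h
  have h2 : ((q.num.toNat : ℚ)) - ((-q.num).toNat : ℚ) = q.num := by
    have : ((q.num.toNat : ℤ)) - ((-q.num).toNat : ℤ) = q.num := by omega
    exact_mod_cast this
  simp only [mkQ, h1, h2]
  exact Rat.num_div_den q

theorem exists_mkQ_inv : ∃ g : ℚ → ℕ × ℕ × ℕ, Computable g ∧ ∀ q, mkQ (g q) = q := by
  classical
  have hex : ∀ q : ℚ, ∃ n : ℕ, mkQ (Denumerable.ofNat (ℕ × ℕ × ℕ) n) = q := by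
    intro q
    obtain ⟨x, hx⟩ := mkQ_surj q
    exact ⟨encode x, by rw [Denumerable.ofNat_encode]; exact hx⟩
  have hc : Computable₂ (fun (q : ℚ) (n : ℕ) =>
      decide (mkQ (Denumerable.ofNat (ℕ × ℕ × ℕ) n) = q)) := by
    have h0 : Computable₂ (fun (a b : ℚ) => decide (a = b)) := (Primrec.eq (α := ℚ)).decide.to_comp
    exact h0.comp (computable_mkQ.comp ((Computable.ofNat _).comp Computable.snd)) Computable.fst
  obtain ⟨g, hg, hg2⟩ := computable_find hc (fun q => by simpa using hex q)
  exact ⟨fun q => Denumerable.ofNat _ (g q), (Computable.ofNat _).comp hg,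
    fun q => by simpa using hg2 q⟩

end RatPart

section RealPart

theorem exists_tfun {T : ℝ} (hT0 : 0 < T) (hTc : ComputableReal T) :
    ∃ t : ℕ → ℕ, Computable t ∧ ∀ k : ℕ, 1 ≤ k → (t k : ℝ) ≤ k * T ∧ k * T ≤ t k + 3 := by
  obtain ⟨f, hf, hfT⟩ := hTc
  obtain ⟨inv, hinv, hinv2⟩ := exists_mkQ_inv
  have hx : Computable (fun k => inv (f k)) := hinv.comp hf
  have hprim : Primrec (fun y : ℕ × (ℕ × ℕ × ℕ) =>
      (y.1 * y.2.1 - y.1 * y.2.2.1) / (y.2.2.2 + 1) - 1) := by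
    have h1 : Primrec (fun y : ℕ × (ℕ × ℕ × ℕ) => y.1) := Primrec.fst
    have h2 : Primrec (fun y : ℕ × (ℕ × ℕ × ℕ) => y.2.1) := Primrec.fst.comp Primrec.snd
    have h3 : Primrec (fun y : ℕ × (ℕ × ℕ × ℕ) => y.2.2.1) :=
      Primrec.fst.comp (Primrec.snd.comp Primrec.snd)
    have h4 : Primrec (fun y : ℕ × (ℕ × ℕ × ℕ) => y.2.2.2) :=
      Primrec.snd.comp (Primrec.snd.comp Primrec.snd)
    exact Primrec.nat_sub.comp (Primrec.nat_div.comp (Primrec.nat_sub.comp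
      (Primrec.nat_mul.comp h1 h2) (Primrec.nat_mul.comp h1 h3)) (Primrec.succ.comp h4))
      (Primrec.const 1)
  refine ⟨_, hprim.to_comp.comp (Computable.id.pair hx), ?_⟩
  intro k hk
  have h := hfT k hk
  rw [← hinv2 (f k)] at h
  generalize inv (f k) = x at h ⊢
  obtain ⟨a, b, d⟩ := x
  simp only [mkQ, id] at h ⊢
  push_cast at h
  have hk0 : (0 : ℝ) < k := by exact_mod_cast hk
  set r : ℝ := k * (((a : ℝ) - b) / (d + 1)) with hr
  have hd : (0 : ℝ) < (d : ℝ) + 1 := by positivity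
  have hkr : |k * T - r| < 1 := by
    rw [hr, ← mul_sub, abs_mul, abs_of_pos hk0]
    rw [lt_div_iff₀ hk0] at h
    linarith
  rw [abs_lt] at hkr
  have hrd : r * (d + 1) = k * a - k * b := by rw [hr]; field_simp
  have hkT : 0 < k * T := by positivity
  set m := (k * a - k * b) / (d + 1) with hm
  rcases le_total b a with hab | hab
  · have hle : k * b ≤ k * a := Nat.mul_le_mul_left _ hab
    have h1 : m * (d + 1) ≤ k * a - k * b := Nat.div_mul_le_self _ _
    have h2 : k * a - k * b < (m + 1) * (d + 1) := by
      have := Nat.lt_div_mul_add (a := k * a - k * b) (b := d + 1) (Nat.succ_pos d)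
      rw [← hm] at this
      rw [add_mul, one_mul]; exact this
    have h1' : (m : ℝ) * (d + 1) ≤ k * a - k * b := by
      have : ((m * (d + 1) : ℕ) : ℝ) ≤ ((k * a - k * b : ℕ) : ℝ) := by exact_mod_cast h1
      rw [Nat.cast_sub hle] at this
      push_cast at this; exact this
    have h2' : (k : ℝ) * a - k * b < (m + 1) * (d + 1) := by
      have : ((k * a - k * b : ℕ) : ℝ) < (((m + 1) * (d + 1) : ℕ) : ℝ) := by exact_mod_cast h2
      rw [Nat.cast_sub hle] at this
      push_cast at this; exact this
    rw [← hrd] at h1' h2'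
    have h1'' : (m : ℝ) ≤ r := le_of_mul_le_mul_right h1' hd
    have h2'' : r < m + 1 := lt_of_mul_lt_mul_right h2' hd.le
    rcases Nat.eq_zero_or_pos m with h0 | h0
    · rw [h0] at h2'' ⊢
      simp at h2'' ⊢
      constructor <;> linarith
    · have : ((m - 1 : ℕ) : ℝ) = m - 1 := by rw [Nat.cast_sub h0]; simp
      rw [this]
      constructor <;> linarith
  · have hle : k * a ≤ k * b := Nat.mul_le_mul_left _ hab
    have hm0 : m = 0 := by rw [hm, Nat.sub_eq_zero_of_le hle]; simp
    have hr0 : r ≤ 0 := by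
      rw [hr]
      apply mul_nonpos_of_nonneg_of_nonpos hk0.le
      apply div_nonpos_of_nonpos_of_nonneg _ hd.le
      have : (a : ℝ) ≤ b := by exact_mod_cast hab
      linarith
    rw [hm0]; simp
    constructor <;> linarith

/-- `E l k i / 2^k` approximates `2^(-l*k/i)` from below. -/
def EE (l k i : ℕ) : ℕ := Nat.findGreatest (fun a => 2 ^ (l * k) * a ^ i ≤ 2 ^ (k * i)) (2 ^ k)

theorem primrec_EE : Primrec (fun x : ℕ × ℕ × ℕ => EE x.1 x.2.1 x.2.2) := by
  have hl : Primrec (fun x : ℕ × ℕ × ℕ => x.1) := Primrec.fst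
  have hk : Primrec (fun x : ℕ × ℕ × ℕ => x.2.1) := Primrec.fst.comp Primrec.snd
  have hi : Primrec (fun x : ℕ × ℕ × ℕ => x.2.2) := Primrec.snd.comp Primrec.snd
  refine Primrec.nat_findGreatest (f := fun x : ℕ × ℕ × ℕ => 2 ^ x.2.1)
    (p := fun x a => 2 ^ (x.1 * x.2.1) * a ^ x.2.2 ≤ 2 ^ (x.2.1 * x.2.2)) ?_ ?_
  · exact primrec_pow.comp (Primrec.const 2) hk
  · refine Primrec.nat_le.comp ?_ ?_
    · exact Primrec.nat_mul.comp (primrec_pow.comp (Primrec.const 2)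
        ((Primrec.nat_mul.comp hl hk).comp Primrec.fst))
        (primrec_pow.comp Primrec.snd (hi.comp Primrec.fst))
    · exact primrec_pow.comp (Primrec.const 2) ((Primrec.nat_mul.comp hk hi).comp Primrec.fst)

theorem EE_cond_iff (l k i a : ℕ) (ha : 0 < a) : 2 ^ (l * k) * a ^ i ≤ 2 ^ (k * i) ↔
    (l : ℝ) * k + i * Real.logb 2 a ≤ k * i := by
  have ha' : (0 : ℝ) < a := by exact_mod_cast ha
  have h1 : (2 ^ (l * k) * a ^ i ≤ 2 ^ (k * i)) ↔
      ((2 : ℝ) ^ (l * k) * (a : ℝ) ^ i ≤ (2 : ℝ) ^ (k * i)) := by exact_mod_cast Iff.rfl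
  rw [h1, ← Real.logb_le_logb (b := 2) (by norm_num) (by positivity) (by positivity),
    Real.logb_mul (by positivity) (by positivity), Real.logb_pow, Real.logb_pow, Real.logb_pow,
    Real.logb_self_eq_one (by norm_num)]
  push_cast
  simp

theorem le_rpow_iff_aux {T : ℝ} (hT : 0 < T) (l k a : ℕ) (ha : 0 < a) :
    (a : ℝ) / 2 ^ k ≤ (2 : ℝ) ^ (-(l : ℝ) / T) ↔ T * (Real.logb 2 a - k) ≤ -l := by
  have ha' : (0 : ℝ) < a := by exact_mod_cast ha
  rw [← Real.logb_le_logb (b := 2) (by norm_num) (by positivity) (by positivity),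
    Real.logb_div (by positivity) (by positivity), Real.logb_pow,
    Real.logb_self_eq_one (by norm_num), Real.logb_rpow (by norm_num) (by norm_num),
    le_div_iff₀ hT, mul_one, mul_comm]

theorem EE_le {T : ℝ} (hT : 0 < T) (l k i : ℕ) (hk : 1 ≤ k) (hi : (i : ℝ) ≤ k * T) :
    (EE l k i : ℝ) / 2 ^ k ≤ (2 : ℝ) ^ (-(l : ℝ) / T) := by
  rcases Nat.eq_zero_or_pos (EE l k i) with h | h
  · rw [h]; simp; positivity
  have hspec : 2 ^ (l * k) * (EE l k i) ^ i ≤ 2 ^ (k * i) :=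
    Nat.findGreatest_of_ne_zero (P := fun a => 2 ^ (l * k) * a ^ i ≤ 2 ^ (k * i)) rfl h.ne'
  have hle : EE l k i ≤ 2 ^ k := Nat.findGreatest_le _
  rw [le_rpow_iff_aux hT l k _ h]
  rw [EE_cond_iff l k i _ h] at hspec
  have hlog : Real.logb 2 (EE l k i) ≤ k := by
    have h1 : ((EE l k i : ℕ) : ℝ) ≤ (2 : ℝ) ^ k := by exact_mod_cast hle
    have := (Real.logb_le_logb (b := 2) (by norm_num) (by positivity) (by positivity)).2 h1
    rwa [Real.logb_pow, Real.logb_self_eq_one (by norm_num), mul_one] at this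
  have hk0 : (0 : ℝ) < k := by exact_mod_cast hk
  set y := Real.logb 2 (EE l k i)
  have : (k : ℝ) * T * (y - k) ≤ i * (y - k) := mul_le_mul_of_nonpos_right hi (by linarith)
  have h3 : (k : ℝ) * (T * (y - k)) ≤ k * (-l) := by nlinarith
  exact le_of_mul_le_mul_left h3 hk0

theorem le_EE {T : ℝ} (hT : 0 < T) (l k i : ℕ) (hk : 1 ≤ k) (hi : k * T ≤ (i : ℝ)) :
    (2 : ℝ) ^ (-(l : ℝ) / T) ≤ ((EE l k i : ℝ) + 1) / 2 ^ k := by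
  by_contra! hcon
  have hcon' : (((EE l k i + 1 : ℕ) : ℝ)) / 2 ^ k < (2 : ℝ) ^ (-(l : ℝ) / T) := by
    push_cast; exact hcon
  have h1 : (2 : ℝ) ^ (-(l : ℝ) / T) ≤ 1 := by
    apply Real.rpow_le_one_of_one_le_of_nonpos (by norm_num)
    apply div_nonpos_of_nonpos_of_nonneg _ hT.le
    simp
  have hlt : EE l k i + 1 ≤ 2 ^ k := by
    have : (((EE l k i + 1 : ℕ) : ℝ)) / 2 ^ k < 1 := lt_of_lt_of_le hcon' h1
    rw [div_lt_one (by positivity)] at this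
    exact_mod_cast this.le
  have hnot : ¬ (2 ^ (l * k) * (EE l k i + 1) ^ i ≤ 2 ^ (k * i)) :=
    Nat.findGreatest_is_greatest (P := fun a => 2 ^ (l * k) * a ^ i ≤ 2 ^ (k * i))
      (Nat.lt_succ_self _) hlt
  apply hnot
  rw [EE_cond_iff l k i _ (Nat.succ_pos _)]
  have h2 := (le_rpow_iff_aux hT l k (EE l k i + 1) (Nat.succ_pos _)).1 hcon'.le
  have hlog : Real.logb 2 ((EE l k i + 1 : ℕ) : ℝ) ≤ k := by
    have h1 : ((EE l k i + 1 : ℕ) : ℝ) ≤ (2 : ℝ) ^ k := by exact_mod_cast hlt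
    have := (Real.logb_le_logb (b := 2) (by norm_num) (by positivity) (by positivity)).2 h1
    rwa [Real.logb_pow, Real.logb_self_eq_one (by norm_num), mul_one] at this
  have hk0 : (0 : ℝ) < k := by exact_mod_cast hk
  set y := Real.logb 2 ((EE l k i + 1 : ℕ) : ℝ)
  have : (i : ℝ) * (y - k) ≤ k * T * (y - k) := mul_le_mul_of_nonpos_right hi (by linarith)
  have h3 : (k : ℝ) * (T * (y - k)) ≤ k * (-l) := mul_le_mul_of_nonneg_left h2 hk0.le
  nlinarith

theorem EE_tendsto {T : ℝ} (hT : 0 < T) (l : ℕ) (i : ℕ → ℕ)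
    (hi : Tendsto (fun k : ℕ => (i k : ℝ) / k) atTop (nhds T)) :
    Tendsto (fun k : ℕ => (EE l k (i k) : ℝ) / 2 ^ k) atTop (nhds ((2 : ℝ) ^ (-(l : ℝ) / T))) := by
  have hlim : Tendsto (fun k : ℕ => (2 : ℝ) ^ (-(l : ℝ) / ((i k : ℝ) / k))) atTop
      (nhds ((2 : ℝ) ^ (-(l : ℝ) / T))) := by
    apply Tendsto.rpow tendsto_const_nhds (tendsto_const_nhds.div hi hT.ne')
    left; norm_num
  have h2 : Tendsto (fun k : ℕ => ((1 : ℝ) / 2) ^ k) atTop (nhds 0) :=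
    tendsto_pow_atTop_nhds_zero_of_lt_one (by norm_num) (by norm_num)
  have hlim2 := hlim.sub h2
  rw [sub_zero] at hlim2
  have hpos : ∀ᶠ k : ℕ in atTop, 0 < (i k : ℝ) / k := hi.eventually (lt_mem_nhds hT)
  refine tendsto_of_tendsto_of_tendsto_of_le_of_le' hlim2 hlim ?_ ?_
  · filter_upwards [hpos, eventually_ge_atTop 1] with k h1 h3
    have hk0 : (0 : ℝ) < k := by exact_mod_cast h3
    have := le_EE h1 l k (i k) h3 (by rw [mul_div_cancel₀ _ hk0.ne'])
    rw [add_div] at this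
    rw [one_div, inv_pow]
    rw [one_div] at this
    linarith
  · filter_upwards [hpos, eventually_ge_atTop 1] with k h1 h3
    have hk0 : (0 : ℝ) < k := by exact_mod_cast h3
    exact EE_le h1 l k (i k) h3 (by rw [mul_div_cancel₀ _ hk0.ne'])

theorem tfun_tendsto {T : ℝ} (t : ℕ → ℕ) (c : ℕ)
    (ht : ∀ k : ℕ, 1 ≤ k → (t k : ℝ) ≤ k * T ∧ k * T ≤ t k + 3) :
    Tendsto (fun k : ℕ => ((t k + c : ℕ) : ℝ) / k) atTop (nhds T) := by
  have h1 : Tendsto (fun k : ℕ => T + (c : ℝ) / k) atTop (nhds T) := by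
    simpa using tendsto_const_nhds.add (tendsto_const_div_atTop_nhds_zero_nat (c : ℝ))
  have h2 : Tendsto (fun k : ℕ => T + ((c : ℝ) - 3) / k) atTop (nhds T) := by
    simpa using tendsto_const_nhds.add (tendsto_const_div_atTop_nhds_zero_nat ((c : ℝ) - 3))
  refine tendsto_of_tendsto_of_tendsto_of_le_of_le' h2 h1 ?_ ?_
  · filter_upwards [eventually_ge_atTop 1] with k hk
    have hk0 : (0 : ℝ) < k := by exact_mod_cast hk
    rw [le_div_iff₀ hk0, add_mul, div_mul_cancel₀ _ hk0.ne']
    push_cast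
    have := (ht k hk).2
    linarith
  · filter_upwards [eventually_ge_atTop 1] with k hk
    have hk0 : (0 : ℝ) < k := by exact_mod_cast hk
    rw [div_le_iff₀ hk0, add_mul, div_mul_cancel₀ _ hk0.ne']
    push_cast
    have := (ht k hk).1
    linarith

end RealPart

section Kraft

theorem prefixFree_uniquelyDecodable (S : Set (List Bool)) (hS : PrefixFree S) (h0 : [] ∉ S) :
    InformationTheory.UniquelyDecodable S := by
  intro L₁
  induction L₁ with
  | nil =>
    intro L₂ _ h2 he
    cases L₂ with
    | nil => rfl
    | cons w L =>
      simp at he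
      exact absurd (he.1 ▸ h2 w (by simp)) h0
  | cons v L₁ ih =>
    intro L₂ h1 h2 he
    cases L₂ with
    | nil =>
      simp at he
      exact absurd (he.1 ▸ h1 v (by simp)) h0
    | cons w L₂ =>
      simp only [List.flatten_cons] at he
      have hv := h1 v (by simp)
      have hw := h2 w (by simp)
      have p1 : v <+: v ++ L₁.flatten := List.prefix_append _ _
      have p2 : w <+: v ++ L₁.flatten := he ▸ List.prefix_append _ _
      have hvw : v = w := by
        rcases List.prefix_or_prefix_of_prefix p1 p2 with h | h
        · exact hS v hv w hw h
        · exact (hS w hw v hv h).symm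
      subst hvw
      rw [List.append_cancel_left_eq] at he
      rw [ih L₂ (fun x hx => h1 x (by simp [hx])) (fun x hx => h2 x (by simp [hx])) he]

theorem kraft_finset (S : Finset (List Bool)) (hS : PrefixFree (S : Set (List Bool))) :
    ∑ w ∈ S, ((1 : ℝ) / 2) ^ w.length ≤ 1 := by
  by_cases h0 : [] ∈ S
  · have : S = {[]} := by
      ext q
      simp only [Finset.mem_singleton]
      constructor
      · intro hq
        exact (hS [] h0 q hq (List.nil_prefix)).symm
      · rintro rfl; exact h0
    rw [this]; simp
  · have := InformationTheory.kraft_mcmillan_inequality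
      (prefixFree_uniquelyDecodable (S : Set (List Bool)) hS (by simpa using h0))
    simpa using this

theorem kraft_sum (U : Computer) (F : Finset U.domain) :
    ∑ p ∈ F, ((1 : ℝ) / 2) ^ (p : List Bool).length ≤ 1 := by
  classical
  have := kraft_finset (F.map (Function.Embedding.subtype _)) (by
    intro p hp q hq h
    simp only [Finset.coe_map, Set.mem_image] at hp hq
    obtain ⟨p', _, rfl⟩ := hp
    obtain ⟨q', _, rfl⟩ := hq
    exact U.prefixFree _ p'.2 _ q'.2 h)
  simpa using this

theorem omega_summable (U : Computer) :
    Summable (fun p : U.domain => ((1 : ℝ) / 2) ^ (p : List Bool).length) :=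
  summable_of_sum_le (fun _ => by positivity) (kraft_sum U)

theorem omega_le_one (U : Computer) :
    ∑' p : U.domain, ((1 : ℝ) / 2) ^ (p : List Bool).length ≤ 1 :=
  (omega_summable U).tsum_le_of_sum_le (kraft_sum U)

theorem zterm_eq (U : Computer) (T : ℝ) (p : U.domain) :
    zterm U T p = (((1 : ℝ) / 2) ^ (p : List Bool).length) ^ (1 / T) := by
  unfold zterm
  rw [← Real.rpow_natCast, ← Real.rpow_mul (by norm_num), one_div (2 : ℝ), Real.inv_rpow (by norm_num),
    ← Real.rpow_neg (by norm_num)]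
  congr 1
  ring

theorem zterm_pos (U : Computer) (T : ℝ) (p : U.domain) : 0 < zterm U T p := by
  unfold zterm; positivity

theorem zterm_summable (U : Computer) {T : ℝ} (hT0 : 0 < T) (hT1 : T ≤ 1) :
    Summable (zterm U T) := by
  refine Summable.of_nonneg_of_le (fun p => (zterm_pos U T p).le) (fun p => ?_) (omega_summable U)
  rw [zterm_eq]
  have h1 : ((1 : ℝ) / 2) ^ (p : List Bool).length ≤ 1 := pow_le_one₀ (by norm_num) (by norm_num)
  calc _ ≤ (((1 : ℝ) / 2) ^ (p : List Bool).length) ^ (1 : ℝ) := by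
        apply Real.rpow_le_rpow_of_exponent_ge (by positivity) h1
        rw [le_div_iff₀ hT0]; linarith
    _ = _ := by rw [Real.rpow_one]

end Kraft

section EnumPart
open Encodable

theorem primrec_lsum {α β} [Primcodable α] [Primcodable β] {f : α → List β} {g : α → β → ℕ}
    (hf : Primrec f) (hg : Primrec₂ g) : Primrec (fun a => ((f a).map (g a)).sum) := by
  have h : Primrec₂ (fun (a : α) (x : β × ℕ) => g a x.1 + x.2) :=
    Primrec.nat_add.comp (hg.comp Primrec.fst (Primrec.fst.comp Primrec.snd))
      (Primrec.snd.comp Primrec.snd)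
  refine (Primrec.list_foldr hf (Primrec.const 0) h).of_eq fun a => ?_
  induction f a with
  | nil => rfl
  | cons b l ih => simp [ih]

theorem exists_enum0 (U : Computer) : ∃ P : ℕ → List (List Bool × List Bool), Primrec P ∧
    (∀ s, ((P s).map Prod.fst).Nodup) ∧
    (∀ s p y, (p, y) ∈ P s → y ∈ U.f p ∧ p.length ≤ s) ∧
    (∀ p y, y ∈ U.f p → ∃ s0, ∀ s, s0 ≤ s → (p, y) ∈ P s) := by
  obtain ⟨c, hc⟩ := Nat.Partrec.Code.exists_code.1 U.partrec
  let st : ℕ → ℕ → Option (List Bool × List Bool) := fun s i =>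
    (decode₂ (List Bool) i).bind fun p => if p.length ≤ s then
      (Nat.Partrec.Code.evaln s c i).bind (fun v => (decode (α := List Bool) v).map (fun y => (p, y)))
      else none
  have hst : Primrec₂ st := by
    refine Primrec.option_bind (Primrec.decode₂.comp Primrec.snd) ?_
    refine Primrec.ite (Primrec.nat_le.comp (Primrec.list_length.comp Primrec.snd)
      (Primrec.fst.comp Primrec.fst)) ?_ (Primrec.const none)
    refine Primrec.option_bind ?_ ?_
    · exact Nat.Partrec.Code.primrec_evaln.comp (Primrec.pair (Primrec.pair
        (Primrec.fst.comp Primrec.fst) (Primrec.const c)) (Primrec.snd.comp Primrec.fst))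
    · refine Primrec.option_map (Primrec.decode.comp Primrec.snd) ?_
      exact Primrec.pair (Primrec.snd.comp (Primrec.fst.comp Primrec.fst)) Primrec.snd
  have hmem : ∀ s i p y, (p, y) ∈ st s i ↔ encode p = i ∧ p.length ≤ s ∧
      ∃ v, v ∈ Nat.Partrec.Code.evaln s c i ∧ decode (α := List Bool) v = some y := by
    intro s i p y
    simp only [st, Option.mem_def, Option.bind_eq_some_iff]
    constructor
    · rintro ⟨p', h1, h2⟩
      rw [← Option.mem_def, mem_decode₂] at h1
      split_ifs at h2 with h3
      simp only [Option.bind_eq_some_iff, Option.map_eq_some_iff, Prod.mk.injEq] at h2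
      obtain ⟨v, hv, y', hy', rfl, rfl⟩ := h2
      exact ⟨h1, h3, v, hv, hy'⟩
    · rintro ⟨h1, h3, v, hv, hy⟩
      refine ⟨p, by rw [← Option.mem_def, mem_decode₂]; exact h1, ?_⟩
      rw [if_pos h3, Option.bind_eq_some_iff]
      exact ⟨v, hv, by simp [hy]⟩
  have heval : ∀ p v, v ∈ Nat.Partrec.Code.eval c (encode p) ↔ ∃ y, y ∈ U.f p ∧ encode y = v := by
    intro p v
    rw [hc]
    simp
  refine ⟨fun s => (List.range s).filterMap (st s), ?_, ?_, ?_, ?_⟩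
  · exact Primrec.listFilterMap Primrec.list_range hst
  · intro s
    rw [List.map_filterMap]
    apply List.Nodup.filterMap _ List.nodup_range
    intro i j p hi hj
    simp only [Option.mem_def, Option.map_eq_some_iff] at hi hj
    obtain ⟨⟨p1, y1⟩, h1, rfl⟩ := hi
    obtain ⟨⟨p2, y2⟩, h2, h3⟩ := hj
    simp only at h3
    subst h3
    rw [← ((hmem _ _ _ _).1 h1).1, ← ((hmem _ _ _ _).1 h2).1]
  · intro s p y h
    simp only [List.mem_filterMap] at h
    obtain ⟨i, _, h⟩ := h
    obtain ⟨rfl, h2, v, hv, hy⟩ := (hmem _ _ _ _).1 h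
    refine ⟨?_, h2⟩
    obtain ⟨y', hy', rfl⟩ := (heval p v).1 (Nat.Partrec.Code.evaln_sound hv)
    rw [encodek] at hy
    cases hy
    exact hy'
  · intro p y hy
    obtain ⟨k, hk⟩ := Nat.Partrec.Code.evaln_complete.1 ((heval p (encode y)).2 ⟨y, hy, rfl⟩)
    refine ⟨max k (max p.length (encode p + 1)), fun s hs => ?_⟩
    simp only [List.mem_filterMap, List.mem_range]
    refine ⟨encode p, by omega, (hmem _ _ _ _).2 ⟨rfl, by omega, encode y, ?_, encodek y⟩⟩
    exact Nat.Partrec.Code.evaln_mono (by omega) hk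

structure IsEnum (U : Computer) (P : ℕ → List (List Bool)) (w : ℕ → List Bool) : Prop where
  prim : Primrec P
  wprim : Primrec w
  nodup : ∀ s, (P s).Nodup
  dom : ∀ s p, p ∈ P s → p ∈ U.domain
  len : ∀ s p, p ∈ P s → p.length ≤ s
  ev : ∀ p, p ∈ U.domain → ∃ s0, ∀ s, s0 ≤ s → p ∈ P s
  out : ∀ s p, p ∈ P s → w s ∉ U.f p

theorem exists_enum (U : Computer) : ∃ P w, IsEnum U P w := by
  obtain ⟨P, h1, h2, h3, h4⟩ := exists_enum0 U
  refine ⟨fun s => (P s).map Prod.fst,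
    fun s => (List.range (((P s).map (fun x => x.2.length)).sum + 1)).map (fun _ => true), ?_⟩
  have hget : ∀ s p, p ∈ (P s).map Prod.fst → ∃ y, (p, y) ∈ P s := by
    intro s p hp
    simpa using hp
  refine ⟨?_, ?_, h2, ?_, ?_, ?_, ?_⟩
  · exact Primrec.list_map h1 (Primrec.fst.comp Primrec.snd)
  · refine Primrec.list_map (Primrec.list_range.comp (Primrec.succ.comp
      (primrec_lsum h1 ?_))) (Primrec.const true)
    exact Primrec.list_length.comp (Primrec.snd.comp Primrec.snd)
  · intro s p hp
    obtain ⟨y, hy⟩ := hget s p hp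
    exact Part.dom_iff_mem.2 ⟨y, (h3 s p y hy).1⟩
  · intro s p hp
    obtain ⟨y, hy⟩ := hget s p hp
    exact (h3 s p y hy).2
  · intro p hp
    obtain ⟨y, hy⟩ := Part.dom_iff_mem.1 hp
    obtain ⟨s0, hs0⟩ := h4 p y hy
    exact ⟨s0, fun s hs => List.mem_map.2 ⟨_, hs0 s hs, rfl⟩⟩
  · intro s p hp hw
    obtain ⟨y, hy⟩ := hget s p hp
    have := Part.mem_unique hw (h3 s p y hy).1
    have hl : y.length ≤ ((P s).map (fun x => x.2.length)).sum :=
      List.le_sum_of_mem (List.mem_map.2 ⟨(p, y), hy, rfl⟩)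
    have := congrArg List.length this
    simp at this
    omega

theorem list_sum_eq_tsum {U : Computer} (L : List (List Bool)) (hn : L.Nodup)
    (hd : ∀ p ∈ L, p ∈ U.domain) (h : List Bool → ℝ) :
    (L.map h).sum = ∑' p : U.domain, if (p : List Bool) ∈ L then h p else 0 := by
  classical
  rw [← List.sum_toFinset h hn]
  rw [tsum_subtype U.domain (fun p => if p ∈ L then h p else 0)]
  rw [tsum_eq_sum (s := L.toFinset)]
  · apply Finset.sum_congr rfl
    intro p hp
    have hp' : p ∈ L := by simpa using hp
    rw [Set.indicator_of_mem (hd p hp'), if_pos hp']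
  · intro p hp
    have hp' : p ∉ L := by simpa using hp
    simp [Set.indicator, hp']

theorem list_sum_le_tsum {U : Computer} (L : List (List Bool)) (hn : L.Nodup)
    (hd : ∀ p ∈ L, p ∈ U.domain) (h : List Bool → ℝ) (b : U.domain → ℝ) (hb0 : ∀ p, 0 ≤ b p)
    (hb : Summable b) (hhb : ∀ p : U.domain, h p ≤ b p) :
    (L.map h).sum ≤ ∑' p, b p := by
  rw [list_sum_eq_tsum L hn hd h]
  refine Summable.tsum_le_tsum ?_ ?_ hb
  · intro p
    split_ifs
    · exact hhb p
    · exact hb0 p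
  · apply summable_of_hasFiniteSupport
    apply Set.Finite.subset (Set.Finite.preimage Subtype.val_injective.injOn L.finite_toSet)
    intro p hp
    simp only [Function.mem_support] at hp
    by_contra hcon
    simp only [Set.mem_preimage, Set.mem_setOf_eq] at hcon
    exact hp (if_neg hcon)

theorem enum_tendsto {U : Computer} {P w} (hP : IsEnum U P w) (e : ℕ → List Bool → ℝ)
    (b : U.domain → ℝ) (he0 : ∀ s p, 0 ≤ e s p) (heb : ∀ s (p : U.domain), e s p ≤ b p)
    (hb : Summable b) (hlim : ∀ p : U.domain, Tendsto (fun s => e s p) atTop (nhds (b p))) :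
    Tendsto (fun s => ((P s).map (e s)).sum) atTop (nhds (∑' p, b p)) := by
  simp_rw [fun s => list_sum_eq_tsum (P s) (hP.nodup s) (hP.dom s) (e s)]
  refine tendsto_tsum_of_dominated_convergence (bound := b) hb ?_ ?_
  · intro p
    refine (hlim p).congr' ?_
    obtain ⟨s0, hs0⟩ := hP.ev p p.2
    filter_upwards [eventually_ge_atTop s0] with s hs
    rw [if_pos (hs0 s hs)]
  · filter_upwards with s p
    split_ifs
    · rw [Real.norm_of_nonneg (he0 _ _)]; exact heb s p
    · rw [norm_zero]; exact (he0 s p).trans (heb s p)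

/-- Numerator of the stage-`s` lower approximation, precision `k`, parameter `i`. -/
def AA (P : ℕ → List (List Bool)) (s k i : ℕ) : ℕ := ((P s).map (fun p => EE p.length k i)).sum

theorem primrec_AA {P : ℕ → List (List Bool)} (hP : Primrec P) :
    Primrec (fun x : ℕ × ℕ × ℕ => AA P x.1 x.2.1 x.2.2) := by
  refine primrec_lsum (hP.comp Primrec.fst) ?_
  exact primrec_EE.comp (Primrec.pair (Primrec.list_length.comp Primrec.snd)
    (Primrec.snd.comp Primrec.fst))

theorem AA_div (P : ℕ → List (List Bool)) (s k i : ℕ) : (AA P s k i : ℝ) / 2 ^ k =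
    ((P s).map (fun p => (EE p.length k i : ℝ) / 2 ^ k)).sum := by
  unfold AA
  induction P s with
  | nil => simp
  | cons a l ih => simp only [List.map_cons, List.sum_cons, Nat.cast_add, add_div, ih]

theorem AA_tendsto {U : Computer} {P w} (hP : IsEnum U P w) {T : ℝ} (hT0 : 0 < T) (hT1 : T ≤ 1)
    (t : ℕ → ℕ) (ht : ∀ k : ℕ, 1 ≤ k → (t k : ℝ) ≤ k * T ∧ k * T ≤ t k + 3) :
    Tendsto (fun s => (AA P s (s + 1) (t (s + 1)) : ℝ) / 2 ^ (s + 1)) atTop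
      (nhds (∑' p, zterm U T p)) := by
  simp_rw [AA_div]
  refine enum_tendsto hP (fun s p => (EE p.length (s + 1) (t (s + 1)) : ℝ) / 2 ^ (s + 1))
    (zterm U T) (fun s p => by positivity) ?_ (zterm_summable U hT0 hT1) ?_
  · intro s p
    exact EE_le hT0 _ _ _ (by omega) (ht (s + 1) (by omega)).1
  · intro p
    have := EE_tendsto hT0 (p : List Bool).length t (by simpa using tfun_tendsto t 0 ht)
    exact this.comp (tendsto_add_atTop_nat 1)

theorem AA_le {U : Computer} {P w} (hP : IsEnum U P w) {T : ℝ} (hT0 : 0 < T) 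
    (s k i : ℕ) (hk : 1 ≤ k) (hi : (i : ℝ) ≤ k * T) :
    (AA P s k i : ℝ) / 2 ^ k ≤ ((P s).map (fun p => (2 : ℝ) ^ (-(p.length : ℝ) / T))).sum := by
  rw [AA_div]
  apply List.sum_le_sum
  intro p _
  exact EE_le hT0 _ _ _ hk hi

theorem psum_le {U : Computer} {P w} (hP : IsEnum U P w) {T : ℝ} (hT0 : 0 < T) (hT1 : T ≤ 1)
    (s : ℕ) : ((P s).map (fun p => (2 : ℝ) ^ (-(p.length : ℝ) / T))).sum ≤ ∑' p, zterm U T p := 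
  list_sum_le_tsum _ (hP.nodup s) (hP.dom s) _ _ (fun p => (zterm_pos U T p).le)
    (zterm_summable U hT0 hT1) (fun p => le_rfl)

theorem computable_aux3 (G : ℕ × ℕ × ℕ → ℕ) (hG : Computable G) {t : ℕ → ℕ} (ht : Computable t) :
    Computable (fun s => G (s, s + 1, t (s + 1))) := by
  have hs : Computable (fun s : ℕ => s + 1) := Computable.succ
  exact hG.comp (Computable.pair Computable.id (Computable.pair hs (ht.comp hs)))

theorem computable_AA {P : ℕ → List (List Bool)} (hP : Primrec P) {t : ℕ → ℕ} (ht : Computable t) :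
    Computable (fun s => AA P s (s + 1) (t (s + 1))) :=
  computable_aux3 (fun x => AA P x.1 x.2.1 x.2.2) (Primrec.to_comp (primrec_AA hP)) ht

theorem left_computable_Z (U : Computer) {T : ℝ} (hT0 : 0 < T) (hT1 : T ≤ 1)
    (hTc : ComputableReal T) : LeftComputable (∑' p, zterm U T p) := by
  obtain ⟨P, w, hP⟩ := exists_enum U
  obtain ⟨t, htc, ht⟩ := exists_tfun hT0 hTc
  have hpow : Primrec (fun s : ℕ => 2 ^ (s + 1) - 1) :=
    Primrec.nat_sub.comp (primrec_pow.comp (Primrec.const 2) Primrec.succ) (Primrec.const 1)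
  have hval : ∀ s, ((mkQ (0, AA P s (s + 1) (t (s + 1)), 2 ^ (s + 1) - 1) : ℚ) : ℝ) =
      -((AA P s (s + 1) (t (s + 1)) : ℝ) / 2 ^ (s + 1)) := by
    intro s
    have h1 : ((2 ^ (s + 1) - 1 : ℕ) : ℝ) + 1 = 2 ^ (s + 1) := by
      have : 2 ^ (s + 1) - 1 + 1 = 2 ^ (s + 1) := Nat.sub_add_cancel (Nat.one_le_two_pow)
      exact_mod_cast this
    simp only [mkQ]
    rw [Rat.cast_div, Rat.cast_add, Rat.cast_natCast, Rat.cast_one, h1]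
    push_cast
    ring
  refine ⟨fun s => mkQ (0, AA P s (s + 1) (t (s + 1)), 2 ^ (s + 1) - 1), ?_, ?_, ?_⟩
  · exact computable_mkQ.comp ((Computable.const 0).pair
      ((computable_AA hP.prim htc).pair hpow.to_comp))
  · intro s
    rw [hval, neg_le_neg_iff]
    exact (AA_le hP hT0 s (s + 1) _ (by omega) (ht _ (by omega)).1).trans (psum_le hP hT0 hT1 s)
  · simp_rw [hval]
    exact (AA_tendsto hP hT0 hT1 t ht).neg

end EnumPart

section BitsPart

def bval (l : List Bool) : ℕ := l.foldl (fun a b => 2 * a + b.toNat) 0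

theorem primrec_bval : Primrec bval := by
  have hb : Primrec Bool.toNat := Primrec.dom_finite _
  refine Primrec.list_foldl (f := fun l : List Bool => l) (g := fun _ => 0)
    (h := fun _ (x : ℕ × Bool) => 2 * x.1 + x.2.toNat) Primrec.id (Primrec.const 0) ?_
  exact Primrec.nat_add.comp (Primrec.nat_mul.comp (Primrec.const 2) (Primrec.fst.comp Primrec.snd))
    (hb.comp (Primrec.snd.comp Primrec.snd))

theorem bval_append (l : List Bool) (b : Bool) : bval (l ++ [b]) = 2 * bval l + b.toNat := by
  simp [bval]

theorem bits_succ (x : ℝ) (n : ℕ) : bits x (n + 1) = bits x n ++ [binDigit x (n + 1)] := by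
  simp [bits, List.range_succ]

theorem bits_length (x : ℝ) (n : ℕ) : (bits x n).length = n := by simp [bits]

theorem floor_two_mul (y : ℝ) : ⌊2 * y⌋ / 2 = ⌊y⌋ := by
  have h := Int.floor_div_natCast (k := ℝ) (2 * y) 2
  have h2 : 2 * y / ((2 : ℕ) : ℝ) = y := by push_cast; ring
  rw [h2] at h
  exact_mod_cast h.symm

theorem bval_bits (x : ℝ) (n : ℕ) : (bval (bits x n) : ℤ) = ⌊Int.fract x * 2 ^ n⌋ := by
  induction n with
  | zero => simp [bits, bval]
  | succ n ih =>
    rw [bits_succ, bval_append]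
    push_cast
    rw [ih]
    have h := floor_two_mul (Int.fract x * 2 ^ n)
    have h2 : 2 * (Int.fract x * 2 ^ n) = Int.fract x * 2 ^ (n + 1) := by ring
    rw [h2] at h
    rw [← h]
    unfold binDigit
    rcases Int.emod_two_eq_zero_or_one ⌊Int.fract x * 2 ^ (n + 1)⌋ with h3 | h3
    · simp [h3]; omega
    · simp [h3]; omega

theorem bval_bits_bounds {x : ℝ} (hx : 0 ≤ x) (n : ℕ) :
    ((⌊x⌋₊ * 2 ^ n + bval (bits x n) : ℕ) : ℝ) ≤ x * 2 ^ n ∧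
    x * 2 ^ n < ((⌊x⌋₊ * 2 ^ n + bval (bits x n) : ℕ) : ℝ) + 1 := by
  have h := bval_bits x n
  have h1 := Int.floor_le (Int.fract x * 2 ^ n)
  have h2 := Int.lt_floor_add_one (Int.fract x * 2 ^ n)
  rw [← h] at h1 h2
  have h3 : x = (⌊x⌋₊ : ℝ) + Int.fract x := by
    rw [natCast_floor_eq_intCast_floor hx]; exact (Int.floor_add_fract x).symm
  have h4 : x * 2 ^ n = (⌊x⌋₊ : ℝ) * 2 ^ n + Int.fract x * 2 ^ n := by
    rw [← add_mul, ← h3]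
  rw [h4]
  push_cast at *
  constructor <;> linarith

def toBits (v n : ℕ) : List Bool :=
  (List.range n).map (fun i => decide (v / 2 ^ (n - 1 - i) % 2 = 1))

theorem primrec_toBits : Primrec₂ toBits := by
  refine Primrec.list_map (Primrec.list_range.comp Primrec.snd) ?_
  have h : Primrec (fun p : (ℕ × ℕ) × ℕ => p.1.1 / 2 ^ (p.1.2 - 1 - p.2) % 2) :=
    Primrec.nat_mod.comp (Primrec.nat_div.comp (Primrec.fst.comp Primrec.fst)
      (primrec_pow.comp (Primrec.const 2) (Primrec.nat_sub.comp (Primrec.nat_sub.comp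
        (Primrec.snd.comp Primrec.fst) (Primrec.const 1)) Primrec.snd))) (Primrec.const 2)
  have h2 : PrimrecPred (fun p : (ℕ × ℕ) × ℕ => p.1.1 / 2 ^ (p.1.2 - 1 - p.2) % 2 = 1) :=
    Primrec.eq.comp h (Primrec.const 1)
  exact h2.decide

theorem toBits_succ (v n : ℕ) : toBits v (n + 1) = toBits (v / 2) n ++ [decide (v % 2 = 1)] := by
  unfold toBits
  rw [List.range_succ, List.map_append]
  congr 1
  · apply List.map_congr_left
    intro i hi
    have hi' : i < n := by simpa using hi
    have : n + 1 - 1 - i = (n - 1 - i) + 1 := by omega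
    rw [this, pow_succ', Nat.div_div_eq_div_mul]
  · simp

theorem bits_eq_toBits {x : ℝ} (hx : 0 ≤ x) (n : ℕ) : bits x n = toBits ⌊x * 2 ^ n⌋₊ n := by
  induction n with
  | zero => simp [bits, toBits]
  | succ n ih =>
    have hf : ∀ m, (⌊x * 2 ^ m⌋₊ : ℕ) = ⌊x⌋₊ * 2 ^ m + bval (bits x m) := by
      intro m
      obtain ⟨h1, h2⟩ := bval_bits_bounds hx m
      rw [Nat.floor_eq_iff (by positivity)]
      exact ⟨h1, h2⟩
    have hm := hf (n + 1)
    have hm0 := hf n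
    rw [bits_succ, bval_append] at hm
    rw [bits_succ, toBits_succ, ih]
    have hb := Bool.toNat_le (binDigit x (n + 1))
    have hp : ⌊x⌋₊ * 2 ^ (n + 1) = 2 * (⌊x⌋₊ * 2 ^ n) := by ring
    congr 2
    · omega
    · cases hbb : binDigit x (n + 1)
      · rw [hbb] at hm; simp at hm; simp; omega
      · rw [hbb] at hm; simp at hm; simp; omega

theorem exists_bval (L v : ℕ) (hv : v < 2 ^ L) : ∃ y : List Bool, y.length = L ∧ bval y = v := by
  induction L generalizing v with
  | zero => exact ⟨[], rfl, by simp [bval]; simp at hv; omega⟩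
  | succ L ih =>
    obtain ⟨y, hy1, hy2⟩ := ih (v / 2) (by rw [pow_succ] at hv; omega)
    refine ⟨y ++ [decide (v % 2 = 1)], by simp [hy1], ?_⟩
    rw [bval_append, hy2]
    rcases Nat.mod_two_eq_zero_or_one v with h | h <;> simp [h] <;> omega

theorem H_le {U : Computer} {x p : List Bool} (h : x ∈ U.f p) : H U x ≤ p.length :=
  Nat.sInf_le ⟨p, rfl, h⟩

theorem H_attained {U : Computer} {x q : List Bool} (h : x ∈ U.f q) :
    ∃ p, p.length = H U x ∧ x ∈ U.f p :=
  Nat.sInf_mem (s := {n | ∃ p : List Bool, p.length = n ∧ x ∈ U.f p}) ⟨q.length, q, rfl, h⟩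

end BitsPart

section RandomPart

def Computer.thn (U : Computer) (g : List Bool →. List Bool) (hg : Partrec g) : Computer where
  f := fun p => (U.f p).bind g
  partrec := U.partrec.bind (hg.comp Computable.snd)
  prefixFree := by
    intro p hp q hq h
    exact U.prefixFree p (Part.Dom.of_bind hp) q (Part.Dom.of_bind hq) h

theorem computable_le {α} [Primcodable α] {f g : α → ℕ} (hf : Computable f) (hg : Computable g) :
    Computable (fun a => decide (f a ≤ g a)) := by
  have h : Primrec (fun x : ℕ × ℕ => decide (x.1 ≤ x.2)) :=
    PrimrecPred.decide Primrec.nat_le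
  exact h.to_comp.comp (hf.pair hg)

theorem computable_add {α} [Primcodable α] {f g : α → ℕ} (hf : Computable f) (hg : Computable g) :
    Computable (fun a => f a + g a) := Primrec.nat_add.to_comp.comp hf hg

theorem computable_mul {α} [Primcodable α] {f g : α → ℕ} (hf : Computable f) (hg : Computable g) :
    Computable (fun a => f a * g a) := Primrec.nat_mul.to_comp.comp hf hg

theorem computable_pow2 {α} [Primcodable α] {f : α → ℕ} (hf : Computable f) :
    Computable (fun a => 2 ^ f a) := primrec_pow.to_comp.comp (Computable.const 2) hf

theorem computable_sc {α} [Primcodable α] {f : α → ℕ} (hf : Computable f) :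
    Computable (fun a => f a + 1) := Computable.succ.comp hf

theorem tail_term {U : Computer} {P w} (hP : IsEnum U P w) {T : ℝ} (hT0 : 0 < T) (hT1 : T ≤ 1)
    (s : ℕ) (p : List Bool) (hp : p ∈ U.domain) (hps : p ∉ P s) :
    (2 : ℝ) ^ (-(p.length : ℝ) / T) + ((P s).map (fun p => (2 : ℝ) ^ (-(p.length : ℝ) / T))).sum
      ≤ ∑' p, zterm U T p := by
  have h := list_sum_le_tsum (U := U) (p :: P s) (List.nodup_cons.2 ⟨hps, hP.nodup s⟩)
    (by
      intro q hq
      rcases List.mem_cons.1 hq with rfl | hq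
      · exact hp
      · exact hP.dom s q hq)
    (fun p => (2 : ℝ) ^ (-(p.length : ℝ) / T)) (zterm U T) (fun p => (zterm_pos U T p).le)
    (zterm_summable U hT0 hT1) (fun p => le_rfl)
  simpa using h

theorem weak_random (U : Computer) (hU : IsOptimal U)
    {T : ℝ} (hT0 : 0 < T) (hT1 : T ≤ 1) (hTc : ComputableReal T)
    (hprog : ∀ n, 1 ≤ n → ∃ q, bits (∑' p, zterm U T p) n ∈ U.f q) :
    WeaklyChaitinRandom U T (∑' p, zterm U T p) := by
  obtain ⟨P, w, hP⟩ := exists_enum U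
  obtain ⟨t, htc, ht⟩ := exists_tfun hT0 hTc
  set Z := ∑' p, zterm U T p with hZ
  have hZ0 : 0 ≤ Z := tsum_nonneg fun p => (zterm_pos U T p).le
  set k0 := ⌊Z⌋₊ with hk0
  have hc : Computable₂ (fun (x : List Bool) (s : ℕ) =>
      decide ((k0 * 2 ^ x.length + bval x) * 2 ^ (s + 1) ≤
        AA P s (s + 1) (t (s + 1)) * 2 ^ x.length + 2 ^ (s + 1))) := by
    have hx : Computable (fun z : List Bool × ℕ => 2 ^ z.1.length) :=
      computable_pow2 (Computable.list_length.comp Computable.fst)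
    have hs : Computable (fun z : List Bool × ℕ => 2 ^ (z.2 + 1)) :=
      computable_pow2 (computable_sc Computable.snd)
    have hA : Computable (fun z : List Bool × ℕ => AA P z.2 (z.2 + 1) (t (z.2 + 1))) :=
      Computable.comp (f := fun s => AA P s (s + 1) (t (s + 1))) (computable_AA hP.prim htc)
        Computable.snd
    exact computable_le (computable_mul (computable_add (computable_mul (Computable.const k0) hx)
      (primrec_bval.to_comp.comp Computable.fst)) hs) (computable_add (computable_mul hA hx) hs)
  obtain ⟨g, hg, hg1, hg2⟩ := partrec_find hc
  have hgw : Partrec (fun x => (g x).map w) :=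
    hg.map (hP.wprim.to_comp.comp Computable.snd)
  obtain ⟨d, hd⟩ := hU (U.thn _ hgw)
  refine ⟨T + d, fun n hn => ?_⟩
  obtain ⟨q, hq⟩ := hprog n hn
  obtain ⟨p, hpl, hp⟩ := H_attained hq
  obtain ⟨hb1, hb2⟩ := bval_bits_bounds hZ0 n
  rw [← hk0] at hb1 hb2
  set N := k0 * 2 ^ n + bval (bits Z n) with hN
  have h2n : (0 : ℝ) < 2 ^ n := by positivity
  have hex : ∃ s, N * 2 ^ (s + 1) ≤ AA P s (s + 1) (t (s + 1)) * 2 ^ n + 2 ^ (s + 1) := by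
    have hlt : ((N : ℝ) - 1) / 2 ^ n < Z := by rw [div_lt_iff₀ h2n]; linarith
    obtain ⟨s, hs⟩ := ((AA_tendsto hP hT0 hT1 t ht).eventually (lt_mem_nhds hlt)).exists
    refine ⟨s, ?_⟩
    have h2s : (0 : ℝ) < 2 ^ (s + 1) := by positivity
    rw [div_lt_div_iff₀ h2n h2s] at hs
    have : ((N * 2 ^ (s + 1) : ℕ) : ℝ) ≤
        ((AA P s (s + 1) (t (s + 1)) * 2 ^ n + 2 ^ (s + 1) : ℕ) : ℝ) := by
      push_cast
      linarith
    exact_mod_cast this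
  obtain ⟨s1, hs1⟩ := hex
  obtain ⟨s, hs⟩ := Part.dom_iff_mem.1 (hg2 (bits Z n) s1 (by
    rw [bits_length]; exact decide_eq_true hs1))
  have hs2 := hg1 _ _ hs
  rw [bits_length] at hs2
  have hs3 : N * 2 ^ (s + 1) ≤ AA P s (s + 1) (t (s + 1)) * 2 ^ n + 2 ^ (s + 1) :=
    of_decide_eq_true hs2
  have hw : w s ∈ (U.thn _ hgw).f p :=
    Part.mem_bind hp (Part.mem_map w hs)
  obtain ⟨p', hp'l, hp'⟩ := hd p (Part.dom_iff_mem.2 ⟨_, hw⟩)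
  have hp'w := hp' _ hw
  have hdom : p' ∈ U.domain := Part.dom_iff_mem.2 ⟨_, hp'w⟩
  have hnot : p' ∉ P s := fun h => hP.out s p' h hp'w
  have htail := tail_term hP hT0 hT1 s p' hdom hnot
  have hA := AA_le hP hT0 s (s + 1) (t (s + 1)) (by omega) (ht (s + 1) (by omega)).1
  have hlt : (2 : ℝ) ^ (-(p'.length : ℝ) / T) < 2 ^ (1 - (n : ℝ)) := by
    have h2s : (0 : ℝ) < 2 ^ (s + 1) := by positivity
    have h3 : (N : ℝ) * 2 ^ (s + 1) ≤ AA P s (s + 1) (t (s + 1)) * 2 ^ n + 2 ^ (s + 1) := by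
      exact_mod_cast hs3
    have h4 : ((N : ℝ) - 1) / 2 ^ n ≤ (AA P s (s + 1) (t (s + 1)) : ℝ) / 2 ^ (s + 1) := by
      rw [div_le_div_iff₀ h2n h2s]; linarith
    have h5 : Z < ((N : ℝ) - 1) / 2 ^ n + 2 / 2 ^ n := by
      rw [← add_div, lt_div_iff₀ h2n]; linarith
    have h6 : (2 : ℝ) ^ (1 - (n : ℝ)) = 2 / 2 ^ n := by
      rw [Real.rpow_sub (by norm_num), Real.rpow_one, Real.rpow_natCast]
    rw [h6]
    linarith
  rw [Real.rpow_lt_rpow_left_iff (by norm_num), div_lt_iff₀ hT0] at hlt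
  have hl : (p'.length : ℝ) ≤ H U (bits Z n) + d := by
    rw [← hpl]; exact_mod_cast hp'l
  linarith

end RandomPart

section HeaderPart

def ones (n : ℕ) : List Bool := (List.range n).map (fun _ => true)

theorem ones_eq (n : ℕ) : ones n = List.replicate n true := by simp [ones]

theorem primrec_ones : Primrec ones := Primrec.list_map Primrec.list_range (Primrec.const true)

theorem ones_cancel (a a' : ℕ) (x x' : List Bool)
    (h : List.replicate a true ++ false :: x = List.replicate a' true ++ false :: x') :
    a = a' ∧ x = x' := by
  induction a generalizing a' with
  | zero =>
    cases a' with
    | zero => simpa using h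
    | succ a' => simp [List.replicate_succ] at h
  | succ a ih =>
    cases a' with
    | zero => simp [List.replicate_succ] at h
    | succ a' =>
      simp only [List.replicate_succ, List.cons_append, List.cons.injEq, true_and] at h
      have := ih a' h
      exact ⟨by rw [this.1], this.2⟩

def hdr (n : ℕ) : List Bool :=
  (ones (Nat.sqrt n) ++ [false]) ++ (ones (n - Nat.sqrt n * Nat.sqrt n) ++ [false])

theorem primrec_hdr : Primrec hdr := by
  have hs : Primrec Nat.sqrt := Primrec.nat_sqrt
  refine Primrec.list_append.comp (Primrec.list_append.comp (primrec_ones.comp hs)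
    (Primrec.const [false])) (Primrec.list_append.comp (primrec_ones.comp ?_)
    (Primrec.const [false]))
  exact Primrec.nat_sub.comp Primrec.id (Primrec.nat_mul.comp hs hs)

theorem hdr_inj {n n' : ℕ} {u u' : List Bool} (h : hdr n ++ u = hdr n' ++ u') : n = n' := by
  simp only [hdr, ones_eq, List.append_assoc, List.cons_append] at h
  obtain ⟨h1, h2⟩ := ones_cancel _ _ _ _ h
  obtain ⟨h3, -⟩ := ones_cancel _ _ _ _ h2
  have e1 := Nat.sqrt_le n
  have e2 := Nat.sqrt_le n'
  rw [h1] at h3 e1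
  omega

theorem hdr_length (n : ℕ) : (hdr n).length ≤ 3 * Nat.sqrt n + 2 := by
  simp only [hdr, ones_eq, List.length_append, List.length_replicate, List.length_singleton]
  have := Nat.sqrt_le_add n
  omega

theorem computable_eqb {α β} [Primcodable α] [Primcodable β] [DecidableEq β] {f g : α → β}
    (hf : Computable f) (hg : Computable g) : Computable (fun a => decide (f a = g a)) := by
  have h : Primrec (fun x : β × β => decide (x.1 = x.2)) := PrimrecPred.decide Primrec.eq
  exact h.to_comp.comp (hf.pair hg)

theorem computable_and {α} [Primcodable α] {f g : α → Bool}
    (hf : Computable f) (hg : Computable g) : Computable (fun a => f a && g a) :=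
  Primrec.and.to_comp.comp hf hg

theorem exists_hdr_computer (len : ℕ → ℕ) (hlen : Computable len)
    (φ : ℕ × List Bool →. List Bool) (hφ : Partrec φ) :
    ∃ C : Computer, ∀ n y z, y.length = len n → z ∈ φ (n, y) → z ∈ C.f (hdr n ++ y) := by
  have hc : Computable₂ (fun (p : List Bool) (n : ℕ) =>
      (decide (p.take (hdr n).length = hdr n)) && decide (p.length = (hdr n).length + len n)) := by
    have hh : Computable (fun z : List Bool × ℕ => hdr z.2) :=
      primrec_hdr.to_comp.comp Computable.snd
    have hl : Computable (fun z : List Bool × ℕ => (hdr z.2).length) :=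
      Computable.list_length.comp hh
    have hr : Computable (fun z : List Bool × ℕ => (hdr z.2).length + len z.2) :=
      computable_add hl (hlen.comp Computable.snd)
    have hp : Computable (fun z : List Bool × ℕ => z.1.length) :=
      Computable.list_length.comp Computable.fst
    have htk : Computable (fun z : List Bool × ℕ => z.1.take (hdr z.2).length) :=
      Primrec.list_take.to_comp.comp hl Computable.fst
    exact computable_and (computable_eqb htk hh) (computable_eqb hp hr)
  obtain ⟨g, hg, hg1, hg2⟩ := partrec_find hc
  have hspec : ∀ p n, n ∈ g p → hdr n ++ p.drop (hdr n).length = p ∧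
      p.length = (hdr n).length + len n := by
    intro p n hn
    have := hg1 p n hn
    simp only [Bool.and_eq_true, decide_eq_true_eq] at this
    refine ⟨?_, this.2⟩
    conv_rhs => rw [← List.take_append_drop (hdr n).length p, this.1]
  refine ⟨⟨fun p => (g p).bind (fun n => φ (n, p.drop (hdr n).length)), ?_, ?_⟩, ?_⟩
  · refine hg.bind (hφ.comp ?_)
    exact Computable.snd.pair (Primrec.list_drop.to_comp.comp (Computable.list_length.comp
      (primrec_hdr.to_comp.comp Computable.snd)) Computable.fst)
  · intro p hp q hq hpq
    have hp2 : ((g p).bind (fun n => φ (n, p.drop (hdr n).length))).Dom := hp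
    have hq2 : ((g q).bind (fun n => φ (n, q.drop (hdr n).length))).Dom := hq
    obtain ⟨n, hn⟩ := Part.dom_iff_mem.1 (Part.Dom.of_bind hp2)
    obtain ⟨m, hm⟩ := Part.dom_iff_mem.1 (Part.Dom.of_bind hq2)
    obtain ⟨h1, h2⟩ := hspec _ _ hn
    obtain ⟨h3, h4⟩ := hspec _ _ hm
    obtain ⟨r, hr⟩ := hpq
    have hnm : n = m := by
      rw [← h1, ← h3, List.append_assoc] at hr
      exact hdr_inj hr
    subst hnm
    exact List.IsPrefix.eq_of_length ⟨r, hr⟩ (by omega)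
  · intro n y z hy hz
    have hd : (g (hdr n ++ y)).Dom := hg2 _ n (by simp [hy])
    obtain ⟨m, hm⟩ := Part.dom_iff_mem.1 hd
    have h1 := (hspec _ _ hm).1
    have hnm : m = n := hdr_inj h1
    subst hnm
    refine Part.mem_bind hm ?_
    rw [List.drop_left]
    exact hz

end HeaderPart

section ComprPart

def BO (P : ℕ → List (List Bool)) (s : ℕ) : ℕ := ((P s).map (fun p => 2 ^ (s - p.length))).sum

def BB (P : ℕ → List (List Bool)) (s k i : ℕ) : ℕ :=
  ((P s).map (fun p => EE p.length k i + 1)).sum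

theorem primrec_BO {P : ℕ → List (List Bool)} (hP : Primrec P) : Primrec (BO P) := by
  refine primrec_lsum hP ?_
  exact primrec_pow.comp (Primrec.const 2) (Primrec.nat_sub.comp Primrec.fst
    (Primrec.list_length.comp Primrec.snd))

theorem primrec_BB {P : ℕ → List (List Bool)} (hP : Primrec P) :
    Primrec (fun x : ℕ × ℕ × ℕ => BB P x.1 x.2.1 x.2.2) := by
  refine primrec_lsum (hP.comp Primrec.fst) ?_
  exact Primrec.succ.comp (primrec_EE.comp (Primrec.pair (Primrec.list_length.comp Primrec.snd)
    (Primrec.snd.comp Primrec.fst)))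

theorem list_cast_div (L : List (List Bool)) (f : List Bool → ℕ) (c : ℝ) :
    (((L.map f).sum : ℕ) : ℝ) / c = (L.map (fun p => (f p : ℝ) / c)).sum := by
  induction L with
  | nil => simp
  | cons a l ih => simp only [List.map_cons, List.sum_cons, Nat.cast_add, add_div, ih]

theorem BO_div {U : Computer} {P w} (hP : IsEnum U P w) (s : ℕ) :
    (BO P s : ℝ) / 2 ^ s = ((P s).map (fun p => ((1 : ℝ) / 2) ^ p.length)).sum := by
  unfold BO
  rw [list_cast_div]
  congr 1
  apply List.map_congr_left
  intro p hp
  have h := hP.len s p hp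
  push_cast
  rw [pow_sub₀ _ (by norm_num) h, one_div, inv_pow]
  field_simp

theorem BO_tendsto {U : Computer} {P w} (hP : IsEnum U P w) :
    Tendsto (fun s => (BO P s : ℝ) / 2 ^ s) atTop
      (nhds (∑' p : U.domain, ((1 : ℝ) / 2) ^ (p : List Bool).length)) := by
  simp_rw [BO_div hP]
  exact enum_tendsto hP (fun _ p => ((1 : ℝ) / 2) ^ p.length)
    (fun p : U.domain => ((1 : ℝ) / 2) ^ (p : List Bool).length) (fun s p => by positivity)
    (fun s p => le_rfl) (omega_summable U) (fun p => tendsto_const_nhds)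

theorem le_BB {U : Computer} {P w} (_ : IsEnum U P w) {T : ℝ} (hT0 : 0 < T)
    (s k i : ℕ) (hk : 1 ≤ k) (hi : k * T ≤ (i : ℝ)) :
    ((P s).map (fun p => (2 : ℝ) ^ (-(p.length : ℝ) / T))).sum ≤ (BB P s k i : ℝ) / 2 ^ k := by
  unfold BB
  rw [list_cast_div]
  apply List.sum_le_sum
  intro p _
  push_cast
  exact le_EE hT0 _ _ _ hk hi

theorem gap_tendsto {T : ℝ} (hT0 : 0 < T) (L : List (List Bool))
    (t : ℕ → ℕ) (ht : ∀ k : ℕ, 1 ≤ k → (t k : ℝ) ≤ k * T ∧ k * T ≤ t k + 3) :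
    Tendsto (fun k : ℕ => (((L.map (fun p => EE p.length k (t k + 3) + 1)).sum : ℕ) : ℝ) / 2 ^ k -
      (((L.map (fun p => EE p.length k (t k))).sum : ℕ) : ℝ) / 2 ^ k) atTop (nhds 0) := by
  induction L with
  | nil => simp
  | cons p L ih =>
    have h1 := EE_tendsto hT0 p.length t (by simpa using tfun_tendsto t 0 ht)
    have h2 := EE_tendsto hT0 p.length (fun k => t k + 3) (tfun_tendsto t 3 ht)
    have h3 : Tendsto (fun k : ℕ => ((1 : ℝ) / 2) ^ k) atTop (nhds 0) :=
      tendsto_pow_atTop_nhds_zero_of_lt_one (by norm_num) (by norm_num)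
    have h4 := ((h2.add h3).sub h1).add ih
    have e : (2 : ℝ) ^ (-(p.length : ℝ) / T) + 0 - 2 ^ (-(p.length : ℝ) / T) + 0 = 0 := by ring
    rw [e] at h4
    refine h4.congr fun k => ?_
    simp only [List.map_cons, List.sum_cons, Nat.cast_add, Nat.cast_one, one_div, inv_pow]
    ring

theorem gap_tail {U : Computer} {P w} (hP : IsEnum U P w) {T : ℝ} (hT0 : 0 < T) (hT1 : T ≤ 1)
    (s : ℕ) (δ : ℝ) (hδ : 0 < δ)
    (h : ∑' p : U.domain, ((1 : ℝ) / 2) ^ (p : List Bool).length ≤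
      ((P s).map (fun p => ((1 : ℝ) / 2) ^ p.length)).sum + δ) :
    ∑' p, zterm U T p ≤ ((P s).map (fun p => (2 : ℝ) ^ (-(p.length : ℝ) / T))).sum +
      δ ^ (1 / T) := by
  classical
  set Ω := ∑' p : U.domain, ((1 : ℝ) / 2) ^ (p : List Bool).length with hΩ
  have e1 := list_sum_eq_tsum (U := U) (P s) (hP.nodup s) (hP.dom s)
    (fun p => ((1 : ℝ) / 2) ^ p.length)
  have e2 := list_sum_eq_tsum (U := U) (P s) (hP.nodup s) (hP.dom s)
    (fun p => (2 : ℝ) ^ (-(p.length : ℝ) / T))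
  have s1 : Summable (fun p : U.domain =>
      if (p : List Bool) ∈ P s then ((1 : ℝ) / 2) ^ (p : List Bool).length else 0) :=
    Summable.of_nonneg_of_le (fun p => by split_ifs <;> positivity)
      (fun p => by split_ifs <;> first | exact le_rfl | positivity) (omega_summable U)
  have s2 : Summable (fun p : U.domain => if (p : List Bool) ∈ P s then
      (2 : ℝ) ^ (-((p : List Bool).length : ℝ) / T) else 0) :=
    Summable.of_nonneg_of_le (fun p => by split_ifs <;> positivity)
      (fun p => by
        split_ifs
        · exact le_rfl
        · exact (zterm_pos U T p).le) (zterm_summable U hT0 hT1)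
  have hexp : 0 ≤ 1 / T - 1 := by
    rw [sub_nonneg, le_div_iff₀ hT0]; linarith
  have hterm : ∀ p : U.domain, zterm U T p ≤
      (if (p : List Bool) ∈ P s then (2 : ℝ) ^ (-((p : List Bool).length : ℝ) / T) else 0) +
      δ ^ (1 / T - 1) * (((1 : ℝ) / 2) ^ (p : List Bool).length -
        if (p : List Bool) ∈ P s then ((1 : ℝ) / 2) ^ (p : List Bool).length else 0) := by
    intro p
    split_ifs with hp
    · simp [zterm]
    · have hx : ((1 : ℝ) / 2) ^ (p : List Bool).length ≤ δ := by
        have h1 := list_sum_le_tsum (U := U) (p :: P s) (List.nodup_cons.2 ⟨hp, hP.nodup s⟩)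
          (by
            intro q hq
            rcases List.mem_cons.1 hq with rfl | hq
            · exact p.2
            · exact hP.dom s q hq)
          (fun p => ((1 : ℝ) / 2) ^ p.length)
          (fun p : U.domain => ((1 : ℝ) / 2) ^ (p : List Bool).length)
          (fun p => by positivity) (omega_summable U) (fun p => le_rfl)
        simp only [List.map_cons, List.sum_cons] at h1
        linarith
      rw [zterm_eq]
      have hx0 : (0 : ℝ) < ((1 : ℝ) / 2) ^ (p : List Bool).length := by positivity
      generalize ((1 : ℝ) / 2) ^ (p : List Bool).length = x at hx hx0
      have : x ^ (1 / T) = x ^ (1 / T - 1) * x := by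
        rw [Real.rpow_sub_one hx0.ne']; field_simp
      rw [this, zero_add, sub_zero]
      exact mul_le_mul_of_nonneg_right (Real.rpow_le_rpow hx0.le hx hexp) hx0.le
  have hsum := Summable.tsum_le_tsum hterm (zterm_summable U hT0 hT1)
    (s2.add (((omega_summable U).sub s1).mul_left _))
  rw [Summable.tsum_add s2 (((omega_summable U).sub s1).mul_left _), tsum_mul_left,
    Summable.tsum_sub (omega_summable U) s1, ← e1, ← e2] at hsum
  refine hsum.trans ?_
  gcongr
  have : δ ^ (1 / T) = δ ^ (1 / T - 1) * δ := by
    rw [Real.rpow_sub_one hδ.ne']; field_simp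
  rw [this]
  gcongr
  linarith

theorem approx_ok {U : Computer} {P w} (hP : IsEnum U P w) {T : ℝ} (hT0 : 0 < T) (hT1 : T ≤ 1)
    (t : ℕ → ℕ) (ht : ∀ k : ℕ, 1 ≤ k → (t k : ℝ) ≤ k * T ∧ k * T ≤ t k + 3)
    (n m K s k : ℕ) (hm : n * T + 1 ≤ m)
    (hK : 2 ^ m * (∑' p : U.domain, ((1 : ℝ) / 2) ^ (p : List Bool).length) - 2 ≤ K)
    (c1 : K * 2 ^ s ≤ 2 ^ m * BO P s)
    (c2 : 2 ^ n * BB P s (k + 1) (t (k + 1) + 3) ≤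
      2 ^ n * AA P s (k + 1) (t (k + 1)) + 2 ^ (k + 1)) :
    2 ^ n * AA P s (k + 1) (t (k + 1)) / 2 ^ (k + 1) ≤ ⌊(∑' p, zterm U T p) * 2 ^ n⌋₊ ∧
    ⌊(∑' p, zterm U T p) * 2 ^ n⌋₊ ≤
      2 ^ n * AA P s (k + 1) (t (k + 1)) / 2 ^ (k + 1) + 2 := by
  set Z := ∑' p, zterm U T p with hZ
  have hZ0 : 0 ≤ Z := tsum_nonneg fun p => (zterm_pos U T p).le
  set A := AA P s (k + 1) (t (k + 1)) with hA
  have b1 := AA_le hP hT0 s (k + 1) (t (k + 1)) (by omega) (ht (k + 1) (by omega)).1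
  have b2 := psum_le hP hT0 hT1 s
  have b3 := le_BB hP hT0 s (k + 1) (t (k + 1) + 3) (by omega)
    (by have := (ht (k + 1) (by omega)).2; push_cast at *; exact this)
  have h2m : (0 : ℝ) < 2 ^ m := by positivity
  have h2n : (0 : ℝ) < 2 ^ n := by positivity
  have h2s : (0 : ℝ) < 2 ^ s := by positivity
  have h2k : (0 : ℝ) < 2 ^ (k + 1) := by positivity
  have b4 := gap_tail hP hT0 hT1 s (2 / 2 ^ m) (by positivity) (by
    rw [← BO_div hP, ← sub_le_iff_le_add]
    have c1' : (K : ℝ) * 2 ^ s ≤ 2 ^ m * BO P s := by exact_mod_cast c1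
    have e1 : (K : ℝ) / 2 ^ m ≤ (BO P s : ℝ) / 2 ^ s := by
      rw [div_le_div_iff₀ h2m h2s]; linarith
    refine le_trans ?_ e1
    rw [le_div_iff₀ h2m, sub_mul, div_mul_cancel₀ _ h2m.ne']
    linarith)
  have b5 : ((2 : ℝ) / 2 ^ m) ^ (1 / T) ≤ 1 / 2 ^ n := by
    have e1 : (2 : ℝ) / 2 ^ m = 2 ^ (1 - (m : ℝ)) := by
      rw [Real.rpow_sub (by norm_num), Real.rpow_one, Real.rpow_natCast]
    have e2 : (1 : ℝ) / 2 ^ n = 2 ^ (-(n : ℝ)) := by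
      rw [Real.rpow_neg (by norm_num), Real.rpow_natCast, one_div]
    rw [e1, e2, ← Real.rpow_mul (by norm_num)]
    apply Real.rpow_le_rpow_of_exponent_le (by norm_num)
    rw [mul_one_div, div_le_iff₀ hT0]
    linarith
  have c2' : (2 : ℝ) ^ n * BB P s (k + 1) (t (k + 1) + 3) ≤ 2 ^ n * A + 2 ^ (k + 1) := by
    exact_mod_cast c2
  have b6 : (BB P s (k + 1) (t (k + 1) + 3) : ℝ) / 2 ^ (k + 1) ≤
      (A : ℝ) / 2 ^ (k + 1) + 1 / 2 ^ n := by
    rw [div_add_div _ _ h2k.ne' h2n.ne', div_le_div_iff₀ h2k (by positivity)]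
    nlinarith
  have hlow : (A : ℝ) / 2 ^ (k + 1) ≤ Z := b1.trans b2
  have hup : Z ≤ (A : ℝ) / 2 ^ (k + 1) + 1 / 2 ^ n + 1 / 2 ^ n := by linarith
  have hv : 2 ^ n * A / 2 ^ (k + 1) = ⌊(A : ℝ) / 2 ^ (k + 1) * 2 ^ n⌋₊ := by
    have := Nat.floor_div_eq_div (K := ℝ) (2 ^ n * A) (2 ^ (k + 1))
    rw [← this]
    congr 1
    push_cast
    ring
  rw [hv]
  constructor
  · exact Nat.floor_le_floor (by gcongr)
  · rw [← Nat.floor_add_ofNat (by positivity)]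
    apply Nat.floor_le_floor
    calc Z * 2 ^ n ≤ ((A : ℝ) / 2 ^ (k + 1) + 1 / 2 ^ n + 1 / 2 ^ n) * 2 ^ n := by gcongr
      _ = (A : ℝ) / 2 ^ (k + 1) * 2 ^ n + 2 := by
        field_simp
        ring

end ComprPart

section FinalPart

theorem compress_bound (U : Computer) (hU : IsOptimal U)
    {T : ℝ} (hT0 : 0 < T) (hT1 : T ≤ 1) (hTc : ComputableReal T) :
    ∃ c : ℝ, ∀ n : ℕ, 1 ≤ n → ∃ q, bits (∑' p, zterm U T p) n ∈ U.f q ∧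
      (q.length : ℝ) ≤ T * n + 3 * (Nat.sqrt n : ℝ) + c := by
  obtain ⟨P, w, hP⟩ := exists_enum U
  obtain ⟨t, htc, ht⟩ := exists_tfun hT0 hTc
  set Z := ∑' p, zterm U T p with hZ
  have hZ0 : 0 ≤ Z := tsum_nonneg fun p => (zterm_pos U T p).le
  have hA0 : Computable (fun x : ℕ × ℕ => AA P x.1 (x.2 + 1) (t (x.2 + 1))) :=
    Computable.comp (f := fun x : ℕ × ℕ × ℕ => AA P x.1 x.2.1 x.2.2)
      (g := fun x : ℕ × ℕ => (x.1, x.2 + 1, t (x.2 + 1))) (primrec_AA hP.prim).to_comp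
      (Computable.fst.pair ((computable_sc Computable.snd).pair
        (htc.comp (computable_sc Computable.snd))))
  have hB0 : Computable (fun x : ℕ × ℕ => BB P x.1 (x.2 + 1) (t (x.2 + 1) + 3)) :=
    Computable.comp (f := fun x : ℕ × ℕ × ℕ => BB P x.1 x.2.1 x.2.2)
      (g := fun x : ℕ × ℕ => (x.1, x.2 + 1, t (x.2 + 1) + 3)) (primrec_BB hP.prim).to_comp
      (Computable.fst.pair ((computable_sc Computable.snd).pair
        (computable_add (htc.comp (computable_sc Computable.snd)) (Computable.const 3))))
  have hO0 : Computable (BO P) := (primrec_BO hP.prim).to_comp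
  generalize hFA : (fun x : ℕ × ℕ => AA P x.1 (x.2 + 1) (t (x.2 + 1))) = FA at hA0
  generalize hFB : (fun x : ℕ × ℕ => BB P x.1 (x.2 + 1) (t (x.2 + 1) + 3)) = FB at hB0
  have eA : ∀ s k, FA (s, k) = AA P s (k + 1) (t (k + 1)) := fun s k => by rw [← hFA]
  have eB : ∀ s k, FB (s, k) = BB P s (k + 1) (t (k + 1) + 3) := fun s k => by rw [← hFB]
  have hc : Computable₂ (fun (x : ℕ × ℕ) (q : ℕ) =>
      decide (x.2 * 2 ^ q.unpair.1 ≤ 2 ^ (t x.1 + 4) * BO P q.unpair.1) &&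
      decide (2 ^ x.1 * FB q.unpair ≤ 2 ^ x.1 * FA q.unpair + 2 ^ (q.unpair.2 + 1))) := by
    have hn : Computable (fun z : (ℕ × ℕ) × ℕ => z.1.1) := Computable.fst.comp Computable.fst
    have hK : Computable (fun z : (ℕ × ℕ) × ℕ => z.1.2) := Computable.snd.comp Computable.fst
    have hu : Computable (fun z : (ℕ × ℕ) × ℕ => z.2.unpair) :=
      Computable.unpair.comp Computable.snd
    have h1 : Computable (fun z : (ℕ × ℕ) × ℕ => z.2.unpair.1) := Computable.fst.comp hu
    have h2 : Computable (fun z : (ℕ × ℕ) × ℕ => z.2.unpair.2) := Computable.snd.comp hu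
    exact computable_and
      (computable_le (computable_mul hK (computable_pow2 h1))
        (computable_mul (computable_pow2 (computable_add (htc.comp hn) (Computable.const 4)))
          (hO0.comp h1)))
      (computable_le (computable_mul (computable_pow2 hn) (hB0.comp hu))
        (computable_add (computable_mul (computable_pow2 hn) (hA0.comp hu))
          (computable_pow2 (computable_sc h2))))
  obtain ⟨g, hg, hg1, hg2⟩ := partrec_find hc
  let out : ℕ × List Bool → ℕ → List Bool := fun x q =>
    toBits (2 ^ x.1 * FA q.unpair / 2 ^ (q.unpair.2 + 1) + bval x.2 % 4) x.1
  have hout : Computable₂ out := by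
    have hn : Computable (fun z : (ℕ × List Bool) × ℕ => z.1.1) :=
      Computable.fst.comp Computable.fst
    have hy : Computable (fun z : (ℕ × List Bool) × ℕ => bval z.1.2) :=
      primrec_bval.to_comp.comp (Computable.snd.comp Computable.fst)
    have hu : Computable (fun z : (ℕ × List Bool) × ℕ => z.2.unpair) :=
      Computable.unpair.comp Computable.snd
    exact primrec_toBits.to_comp.comp (computable_add
      (Primrec.nat_div.to_comp.comp (computable_mul (computable_pow2 hn) (hA0.comp hu))
        (computable_pow2 (computable_sc (Computable.snd.comp hu))))
      (Primrec.nat_mod.to_comp.comp hy (Computable.const 4))) hn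
  have hin : Computable (fun x : ℕ × List Bool => (x.1, bval x.2 / 4)) :=
    Computable.fst.pair (Primrec.nat_div.to_comp.comp
      (primrec_bval.to_comp.comp Computable.snd) (Computable.const 4))
  have hφ : Partrec (fun x : ℕ × List Bool => (g (x.1, bval x.2 / 4)).map (out x)) :=
    (hg.comp hin).map hout
  obtain ⟨C, hC⟩ := exists_hdr_computer (fun n => t n + 6)
    (computable_add htc (Computable.const 6)) _ hφ
  obtain ⟨d, hd⟩ := hU C
  refine ⟨8 + d, fun n hn => ?_⟩
  set Ω := ∑' p : U.domain, ((1 : ℝ) / 2) ^ (p : List Bool).length with hΩ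
  have hΩ0 : 0 ≤ Ω := tsum_nonneg fun p => by positivity
  have hΩ1 : Ω ≤ 1 := omega_le_one U
  set m := t n + 4 with hm
  have hmT : (n : ℝ) * T + 1 ≤ m := by
    have := (ht n hn).2
    rw [hm]; push_cast; linarith
  have h2m : (0 : ℝ) < 2 ^ m := by positivity
  have h2n : (0 : ℝ) < 2 ^ n := by positivity
  set K := ⌊2 ^ m * Ω⌋₊ - 1 with hKdef
  have hf1 : (⌊2 ^ m * Ω⌋₊ : ℝ) ≤ 2 ^ m * Ω := Nat.floor_le (by positivity)
  have hf2 : 2 ^ m * Ω < (⌊2 ^ m * Ω⌋₊ : ℝ) + 1 := Nat.lt_floor_add_one _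
  have hK1 : 2 ^ m * Ω - 2 ≤ (K : ℝ) := by
    have : ⌊2 ^ m * Ω⌋₊ ≤ K + 1 := by omega
    have : (⌊2 ^ m * Ω⌋₊ : ℝ) ≤ K + 1 := by exact_mod_cast this
    linarith
  have hKlt : K < 2 ^ m := by
    have h1 : (⌊2 ^ m * Ω⌋₊ : ℝ) ≤ ((2 ^ m : ℕ) : ℝ) := by
      push_cast
      nlinarith
    have h1' : ⌊2 ^ m * Ω⌋₊ ≤ 2 ^ m := by exact_mod_cast h1
    have : 0 < 2 ^ m := by positivity
    omega
  have hex1 : ∃ s, K * 2 ^ s ≤ 2 ^ m * BO P s := by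
    by_cases hK0 : K = 0
    · exact ⟨0, by simp [hK0]⟩
    · have hlt : (K : ℝ) / 2 ^ m < Ω := by
        rw [div_lt_iff₀ h2m]
        have : K + 1 = ⌊2 ^ m * Ω⌋₊ := by omega
        have : (K : ℝ) + 1 = (⌊2 ^ m * Ω⌋₊ : ℝ) := by exact_mod_cast this
        linarith
      obtain ⟨s, hs⟩ := ((BO_tendsto hP).eventually (lt_mem_nhds hlt)).exists
      refine ⟨s, ?_⟩
      rw [div_lt_div_iff₀ h2m (by positivity)] at hs
      have : ((K * 2 ^ s : ℕ) : ℝ) ≤ ((2 ^ m * BO P s : ℕ) : ℝ) := by push_cast; linarith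
      exact_mod_cast this
  obtain ⟨s, hs⟩ := hex1
  have hex2 : ∃ k, 2 ^ n * BB P s (k + 1) (t (k + 1) + 3) ≤
      2 ^ n * AA P s (k + 1) (t (k + 1)) + 2 ^ (k + 1) := by
    have h1 := (gap_tendsto hT0 (P s) t ht).comp (tendsto_add_atTop_nat 1)
    have hlt : (0 : ℝ) < 1 / 2 ^ n := by positivity
    obtain ⟨k, hk⟩ := (h1.eventually (gt_mem_nhds hlt)).exists
    refine ⟨k, ?_⟩
    have hk' : (BB P s (k + 1) (t (k + 1) + 3) : ℝ) / 2 ^ (k + 1) -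
      (AA P s (k + 1) (t (k + 1)) : ℝ) / 2 ^ (k + 1) < 1 / 2 ^ n := hk
    rw [← sub_div, div_lt_div_iff₀ (by positivity) h2n] at hk'
    have : ((2 ^ n * BB P s (k + 1) (t (k + 1) + 3) : ℕ) : ℝ) ≤
      ((2 ^ n * AA P s (k + 1) (t (k + 1)) + 2 ^ (k + 1) : ℕ) : ℝ) := by
      push_cast
      linarith
    exact_mod_cast this
  obtain ⟨k, hk⟩ := hex2
  have hdom : (g (n, K)).Dom := by
    apply hg2 (n, K) (Nat.pair s k)
    simp only [Nat.unpair_pair, Bool.and_eq_true, decide_eq_true_eq]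
    rw [eA, eB]
    exact ⟨hs, hk⟩
  obtain ⟨q, hq⟩ := Part.dom_iff_mem.1 hdom
  have hq1 := hg1 _ _ hq
  simp only [Bool.and_eq_true, decide_eq_true_eq] at hq1
  obtain ⟨c1, c2⟩ := hq1
  have eA' : FA q.unpair = AA P q.unpair.1 (q.unpair.2 + 1) (t (q.unpair.2 + 1)) := eA _ _
  have eB' : FB q.unpair = BB P q.unpair.1 (q.unpair.2 + 1) (t (q.unpair.2 + 1) + 3) := eB _ _
  rw [eA', eB'] at c2
  obtain ⟨hl, hu⟩ := approx_ok hP hT0 hT1 t ht n m K _ _ hmT hK1 c1 c2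
  rw [← eA', ← hZ] at hl hu
  set v := 2 ^ n * FA q.unpair / 2 ^ (q.unpair.2 + 1) with hv
  set N := ⌊Z * 2 ^ n⌋₊ with hN
  obtain ⟨y, hy1, hy2⟩ := exists_bval (t n + 6) (4 * K + (N - v)) (by
    have : 2 ^ (t n + 6) = 4 * 2 ^ m := by rw [hm]; ring
    omega)
  have hK4 : bval y / 4 = K := by omega
  have he4 : bval y % 4 = N - v := by omega
  have hmem : bits Z n ∈ C.f (hdr n ++ y) := by
    apply hC n y _ hy1
    have h1 : q ∈ g (n, bval y / 4) := by rw [hK4]; exact hq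
    have h2 : bits Z n = out (n, y) q := by
      rw [bits_eq_toBits hZ0]
      change toBits N n = toBits (v + bval y % 4) n
      rw [he4]
      congr 1
      omega
    rw [h2]
    exact Part.mem_map (out (n, y)) h1
  obtain ⟨p', hp'l, hp'⟩ := hd _ (Part.dom_iff_mem.2 ⟨_, hmem⟩)
  refine ⟨p', hp' _ hmem, ?_⟩
  have hh := hdr_length n
  rw [List.length_append, hy1] at hp'l
  have h3 : p'.length ≤ t n + 3 * Nat.sqrt n + (8 + d) := by omega
  have h4 : (p'.length : ℝ) ≤ t n + 3 * (Nat.sqrt n : ℝ) + (8 + d) := by exact_mod_cast h3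
  have h5 := (ht n hn).1
  linarith

theorem compressible_of_bound (U : Computer) {T x c : ℝ}
    (h : ∀ n : ℕ, 1 ≤ n → (H U (bits x n) : ℝ) ≤ T * n + 3 * (Nat.sqrt n : ℝ) + c) :
    DCompressible U T x := by
  unfold DCompressible
  have hs : Tendsto (fun n : ℕ => (Real.sqrt n)⁻¹) atTop (nhds 0) :=
    (Real.tendsto_sqrt_atTop.comp tendsto_natCast_atTop_atTop).inv_tendsto_atTop
  have hlim : Tendsto (fun n : ℕ => T + 3 * (Real.sqrt n)⁻¹ + c / n) atTop (nhds T) := by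
    have := (tendsto_const_nhds (x := T)).add (hs.const_mul 3)
    simpa using this.add (tendsto_const_div_atTop_nhds_zero_nat c)
  rw [← hlim.limsup_eq]
  refine limsup_le_limsup ?_ ?_ hlim.isBoundedUnder_le
  · filter_upwards [eventually_ge_atTop 1] with n hn
    have hn0 : (0 : ℝ) < n := by exact_mod_cast hn
    rw [div_le_iff₀ hn0]
    have h1 : (Nat.sqrt n : ℝ) ≤ Real.sqrt n := Real.nat_sqrt_le_real_sqrt
    have h2 : (Real.sqrt n)⁻¹ * n = Real.sqrt n := by
      have h3 : Real.sqrt n * Real.sqrt n = n := Real.mul_self_sqrt hn0.le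
      have h4 : 0 < Real.sqrt n := Real.sqrt_pos.2 hn0
      field_simp
      linarith
    have h3 : c / n * n = c := div_mul_cancel₀ _ hn0.ne'
    have := h n hn
    calc (H U (bits x n) : ℝ) ≤ T * n + 3 * Real.sqrt n + c := by linarith
      _ = _ := by rw [add_mul, add_mul, mul_assoc, h2, h3]
  · exact isCoboundedUnder_le_of_le atTop (x := 0) (fun n => by positivity)

end FinalPart


/-- **Theorem (paper Thm 8(i)).** For computable `T` with `0 < T ≤ 1`, the
partition function `Z(T) = ∑_{p ∈ dom U} 2^{-|p|/T}` converges to a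
left-computable real which is weakly Chaitin `T`-random and `T`-compressible. -/
theorem Z_converges_random_compressible (U : Computer) (hU : IsOptimal U)
    (T : ℝ) (hT0 : 0 < T) (hT1 : T ≤ 1) (hTc : ComputableReal T) :
    Summable (zterm U T) ∧
    LeftComputable (∑' p, zterm U T p) ∧
    WeaklyChaitinRandom U T (∑' p, zterm U T p) ∧
    DCompressible U T (∑' p, zterm U T p) := by
  obtain ⟨c, hc⟩ := compress_bound U hU hT0 hT1 hTc
  refine ⟨zterm_summable U hT0 hT1, left_computable_Z U hT0 hT1 hTc,
    weak_random U hU hT0 hT1 hTc fun n hn => ?_, compressible_of_bound U (c := c) fun n hn => ?_⟩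
  · obtain ⟨q, hq, -⟩ := hc n hn
    exact ⟨q, hq⟩
  · obtain ⟨q, hq, hl⟩ := hc n hn
    have h1 : (H U (bits (∑' p, zterm U T p) n) : ℝ) ≤ q.length := by exact_mod_cast H_le hq
    exact h1.trans hl
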